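/- arXiv:math/0412090 — 3 statements merged into one kernel-verified Lean document; each statement's English description precedes it below -/
import Mathlib

section
/- Let w be a positive even integer and let E be an even weighted Dedekind symbol of weight w whose reciprocity function is a polynomial, i.e. there exists a homogeneous polynomial g(X,Y) of degree w with complex coefficients such that E(h,k) − E(k,−h) = g(h,k) for all h,k ∈ ℤ⁺. Then E is a linear combination of the symbols E_{w,n} for odd n with 0 < n < w together with F_w and G_w; that is, there exist constants c_n ∈ ℂ (n odd, 0<n<w) and a, b ∈ ℂ such that E(h,k) = Σ_{0<n<w, n odd} c_n·E_{w,n}(h,k) + a·h^w + b·gcd(h,k)^w for all (h,k) ∈ ℤ⁺×ℤ. -/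
open scoped Classical
open MvPolynomial

/-- A weighted Dedekind symbol of weight `w`. -/
def IsDedekindSymbol (w : ℕ) (E : ℤ → ℤ → ℂ) : Prop :=
  (∀ h k : ℤ, 0 < h → E h (k + h) = E h k) ∧
  (∀ h k c : ℤ, 0 < h → 0 < c → E (c * h) (c * k) = (c : ℂ) ^ w * E h k)

/-- The `m`-th Bernoulli function `B̄_m(x) = B_m(x − ⌊x⌋)` (ℂ-valued, rational argument). -/
noncomputable def Bbar (m : ℕ) (x : ℚ) : ℂ :=
  ((Polynomial.bernoulli m).eval (x - ⌊x⌋) : ℚ)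

/-- The `m`-th Bernoulli number `B_m = B_m(0)`. -/
noncomputable def Bnum (m : ℕ) : ℂ := ((bernoulli m : ℚ) : ℂ)

/-- The finite sum `I_{w,n}(h,k) = (1/2)·∑ sgn(k/h+b/a)·(ak+bh)^{w-n}·(ck+dh)^n`,
over quadruples `(a,b,c,d) ∈ ℤ⁴` with `ad−bc = 1`, `a ≠ 0`, `c ≠ 0`,
`|b+⌊k/h+1/2⌋a| ≤ |a| ≤ h`, `|d+⌊k/h+1/2⌋c| ≤ |c| ≤ h` and `(k/h+b/a)(k/h+d/c) < 0`;
the factor `1/2` accounts for the quotient of `SL(2,ℤ)` by `±1`. -/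
noncomputable def Iwn (w n : ℕ) (h k : ℤ) : ℂ :=
  (1 / 2) * ∑ᶠ p : ℤ × ℤ × ℤ × ℤ,
    if p.1 * p.2.2.2 - p.2.1 * p.2.2.1 = 1 ∧ p.1 ≠ 0 ∧ p.2.2.1 ≠ 0 ∧
        |p.2.1 + ⌊(k : ℚ) / h + 1 / 2⌋ * p.1| ≤ |p.1| ∧ |p.1| ≤ h ∧
        |p.2.2.2 + ⌊(k : ℚ) / h + 1 / 2⌋ * p.2.2.1| ≤ |p.2.2.1| ∧ |p.2.2.1| ≤ h ∧
        ((k : ℚ) / h + p.2.1 / p.1) * ((k : ℚ) / h + p.2.2.2 / p.2.2.1) < 0 then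
      (Real.sign ((k : ℝ) / h + (p.2.1 : ℝ) / p.1) : ℂ) *
        ((p.1 * k + p.2.1 * h : ℤ) : ℂ) ^ (w - n) * ((p.2.2.1 * k + p.2.2.2 * h : ℤ) : ℂ) ^ n
    else 0

/-- `E_{w,n}` for odd `n`. -/
noncomputable def EwnOdd (w n : ℕ) (h k : ℤ) : ℂ :=
  Iwn w n h k - Bbar (n + 1) ((k : ℚ) / h) / ((n : ℂ) + 1) * (h : ℂ) ^ w
    - Bbar (w - n + 1) ((k : ℚ) / h) / (((w - n : ℕ) : ℂ) + 1) * (h : ℂ) ^ w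
    + ((w : ℂ) + 2) / Bnum (w + 2) * (Bnum (n + 1) / ((n : ℂ) + 1))
      * (Bnum (w - n + 1) / (((w - n : ℕ) : ℂ) + 1)) * (h : ℂ) ^ w

/-!
A symbol with `E(h,k) = E(k,h)` for all `h, k > 0` is determined by its value at `(1,0)`, by the
Euclidean algorithm, and is a multiple of `gcd(h,k)^w`. It therefore suffices to match reciprocity
functions.

In `I_{w,n}(h,k) - I_{w,n}(k,h)` all matrices cancel under an exchange of columns except the two
families `(1,0,-j,1)` and `(j,-1,1,0)` with `0 < j < h/k`, and their analogues for `(k,h)`. These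
contribute power sums, so with `P = B_{n+1}(X)/(n+1) + B_{ñ+1}(X)/(ñ+1)` and a constant `κ` the
reciprocity function of `E_{w,n}` is `κ(h^w - k^w) - (h^w P(k/h) - k^w P(h/k))`.

Conversely, a reciprocity polynomial `g` is antisymmetric, even in each variable and satisfies a
three-term relation. For `V(x) = (g(1,x) + g(1,x-1))/3` this gives
`g(h,k) = h^w V(k/h) - k^w V(h/k)`, and `V(x+1) - V(x) = (g(1,x+1) - g(1,x-1))/3` is an odd
palindromic polynomial. As `P(x+1) - P(x) = x^n + x^ñ`, its coefficients express `V` as a constant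
plus a linear combination of the polynomials `P`.
-/

open scoped Polynomial Pointwise

section Polynomials

theorem eval_eq_eval_one_of_periodic {R : Type*} [CommRing R] [IsDomain R] [CharZero R] {p : R[X]}
    (hp : ∀ x : R, x ≠ 0 → p.eval (x + 1) = p.eval x) (x : R) : p.eval x = p.eval 1 := by
  have hnat : ∀ n : ℕ, p.eval ((n : R) + 1) = p.eval 1 := fun n => by
    induction n with
    | zero => simp
    | succ n ih => rw [← ih, Nat.cast_succ, hp _ (Nat.cast_add_one_ne_zero n)]
  have hinj : Function.Injective fun n : ℕ => (n : R) + 1 := fun a b hab => by simpa using hab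
  have hconst : p = Polynomial.C (p.eval 1) :=
    Polynomial.eq_of_infinite_eval_eq _ _ <| (Set.infinite_range_of_injective hinj).mono <| by
      rintro _ ⟨n, rfl⟩
      simp [hnat]
  rw [hconst]
  simp

theorem eq_of_forall_pos_int_eval_eq {σ R : Type*} [CommRing R] [IsDomain R]
    [CharZero R] {p q : MvPolynomial σ R}
    (hpq : ∀ x : σ → ℤ, (∀ i, 0 < x i) →
      eval (fun i => (x i : R)) p = eval (fun i => (x i : R)) q) :
    p = q := by
  refine funext_set (fun _ => ((↑) : ℤ → R) '' Set.Ioi 0)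
    (fun _ => (Set.Ioi_infinite 0).image Int.cast_injective.injOn) fun y hy => ?_
  choose x hx hxy using fun i => hy i (Set.mem_univ i)
  obtain rfl : (fun i => (x i : R)) = y := _root_.funext hxy
  exact hpq x hx

theorem eval_smul_of_isHomogeneous {σ R : Type*} [CommSemiring R] {p : MvPolynomial σ R} {w : ℕ}
    (hp : p.IsHomogeneous w) (c : R) (x : σ → R) : eval (c • x) p = c ^ w * eval x p := by
  rw [eval_eq, eval_eq, Finset.mul_sum]
  refine Finset.sum_congr rfl fun d hd => ?_
  have hdeg : ∑ i ∈ d.support, d i = w := by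
    rw [← Finsupp.degree_apply, Finsupp.degree_eq_weight_one]
    exact hp (mem_support_iff.mp hd)
  simp only [Pi.smul_apply, smul_eq_mul, mul_pow, Finset.prod_mul_distrib,
    Finset.prod_pow_eq_pow_sum, hdeg]
  ring

theorem eval_bind₁_vec {R : Type*} [CommSemiring R] (x : Fin 2 → R)
    (u v g : MvPolynomial (Fin 2) R) :
    eval x (bind₁ ![u, v] g) = eval ![eval x u, eval x v] g := by
  refine (eval₂Hom_bind₁ _ _ _ _).trans ?_
  rw [eval]
  congr 2
  ext i
  fin_cases i <;> rfl

/-- The polynomial `g(1, X)`. -/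
noncomputable def dehomogenization {R : Type*} [CommSemiring R]
    (g : MvPolynomial (Fin 2) R) : R[X] :=
  aeval ![1, Polynomial.X] g

theorem eval_dehomogenization {R : Type*} [CommSemiring R] (g : MvPolynomial (Fin 2) R) (x : R) :
    (dehomogenization g).eval x = eval ![1, x] g := by
  rw [dehomogenization, ← Polynomial.coe_evalRingHom, map_aeval, eval]
  congr 1
  ext i
  · simp
  · fin_cases i <;> simp

end Polynomials

section Bernoulli

variable (K : Type*) [Field K] [CharZero K]

/-- The polynomial `B_{n+1}(X) / (n+1)` over `K`, whose forward difference is `X^n`. -/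
noncomputable def bernoulliAntidifference (n : ℕ) : K[X] :=
  Polynomial.C (1 / ((n : K) + 1)) * (Polynomial.bernoulli (n + 1)).map (algebraMap ℚ K)

theorem eval_bernoulliAntidifference_add_one (n : ℕ) (x : K) :
    (bernoulliAntidifference K n).eval (x + 1) = (bernoulliAntidifference K n).eval x + x ^ n := by
  have hn : (n : K) + 1 ≠ 0 := Nat.cast_add_one_ne_zero n
  have hB := congr(Polynomial.aeval x $(Polynomial.bernoulli_comp_one_add_X (n + 1)))
  rw [Polynomial.aeval_comp, map_add, map_add, map_one, Polynomial.aeval_X, add_comm 1 x] at hB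
  simp only [bernoulliAntidifference, Polynomial.eval_mul, Polynomial.eval_C,
    Polynomial.eval_map_algebraMap, hB]
  simp only [one_div, add_tsub_cancel_right, nsmul_eq_mul, Nat.cast_add, Nat.cast_one, map_mul,
    map_add, map_natCast, map_one, map_pow, Polynomial.aeval_X]
  field_simp

theorem sum_Icc_sub_pow (n N : ℕ) (x : K) :
    ∑ j ∈ Finset.Icc 1 N, (x - j) ^ n =
      (bernoulliAntidifference K n).eval x - (bernoulliAntidifference K n).eval (x - N) := by
  induction N with
  | zero => simp
  | succ N ih =>
    have hstep := eval_bernoulliAntidifference_add_one K n (x - (N + 1 : ℕ))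
    rw [show x - (N + 1 : ℕ) + 1 = x - N by push_cast; ring] at hstep
    rw [Finset.sum_Icc_succ_top (by lia), ih, hstep]
    ring

/-- The polynomial `B_{n+1}(X)/(n+1) + B_{ñ+1}(X)/(ñ+1)`, where `ñ = w - n`, in terms of which the
reciprocity function of `E_{w,n}` is expressed. It is meant for `n ≤ w`, the subtraction being
truncated. -/
noncomputable def bernoulliPair (w n : ℕ) : K[X] :=
  bernoulliAntidifference K n + bernoulliAntidifference K (w - n)

/-- The odd integers `n` with `0 < n < w`. -/
def oddIndices (w : ℕ) : Finset ℕ := (Finset.range w).filter fun n => 0 < n ∧ Odd n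

theorem mem_oddIndices_iff {w n : ℕ} (hw : Even w) :
    n ∈ oddIndices w ↔ Odd n ∧ Odd (w - n) ∧ n ≤ w := by
  simp only [oddIndices, Finset.mem_filter, Finset.mem_range]
  grind

variable {K} {w : ℕ}

theorem sum_oddIndices_coeff_mul_pow (hw : Even w) {q : K[X]} (hdeg : q.natDegree ≤ w)
    (hodd : ∀ x, q.eval (-x) = -q.eval x) (x : K) :
    ∑ n ∈ oddIndices w, q.coeff n * x ^ n = q.eval x := by
  have hcomp : q.comp (Polynomial.C (-1) * Polynomial.X) = -q :=
    Polynomial.funext fun y => by simp [hodd]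
  have hcoeff : ∀ n, Even n → q.coeff n = 0 := fun n hn => by
    have := congr(($hcomp).coeff n)
    rw [Polynomial.comp_C_mul_X_coeff, hn.neg_one_pow, mul_one, Polynomial.coeff_neg] at this
    exact self_eq_neg.mp this
  rw [Polynomial.eval_eq_sum_range' (Nat.lt_succ_of_le hdeg)]
  refine Finset.sum_subset (fun n hn => ?_) fun n hn hn' => ?_
  · exact Finset.mem_range_succ_iff.mpr ((mem_oddIndices_iff hw).mp hn).2.2
  · rw [hcoeff n, zero_mul]
    rw [mem_oddIndices_iff hw] at hn'
    grind

theorem exists_eval_eq_add_sum_bernoulliPair (hw : Even w) {V q : K[X]}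
    (hV : ∀ x, V.eval (x + 1) = V.eval x + q.eval x) (hdeg : q.natDegree ≤ w)
    (hodd : ∀ x, q.eval (-x) = -q.eval x)
    (hpal : ∀ x, x ≠ 0 → x ^ w * q.eval x⁻¹ = q.eval x) :
    ∃ (c : ℕ → K) (κ : K), ∀ x,
      V.eval x = κ + ∑ n ∈ oddIndices w, c n * (bernoulliPair K w n).eval x := by
  let U : K[X] := V - ∑ n ∈ oddIndices w, Polynomial.C (q.coeff n / 2) * bernoulliPair K w n
  have hU : ∀ x, U.eval x =
      V.eval x - ∑ n ∈ oddIndices w, q.coeff n / 2 * (bernoulliPair K w n).eval x := fun x => by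
    simp [U, Polynomial.eval_finsetSum]
  have hpair : ∀ x ≠ 0, ∑ n ∈ oddIndices w, q.coeff n / 2 * (bernoulliPair K w n).eval (x + 1) =
      ∑ n ∈ oddIndices w, q.coeff n / 2 * (bernoulliPair K w n).eval x + q.eval x := fun x hx => by
    have hterm : ∀ n ∈ oddIndices w, q.coeff n / 2 * (bernoulliPair K w n).eval (x + 1) =
        q.coeff n / 2 * (bernoulliPair K w n).eval x
          + (q.coeff n * x ^ n + x ^ w * (q.coeff n * x⁻¹ ^ n)) / 2 := fun n hn => by
      simp only [bernoulliPair, Polynomial.eval_add, eval_bernoulliAntidifference_add_one,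
        pow_sub₀ x hx ((mem_oddIndices_iff hw).mp hn).2.2, inv_pow]
      ring
    rw [Finset.sum_congr rfl hterm, Finset.sum_add_distrib, ← Finset.sum_div,
      Finset.sum_add_distrib, ← Finset.mul_sum, sum_oddIndices_coeff_mul_pow hw hdeg hodd,
      sum_oddIndices_coeff_mul_pow hw hdeg hodd, hpal x hx, add_self_div_two]
  have hconst := eval_eq_eval_one_of_periodic (p := U) fun x hx => by
    rw [hU, hU, hV, hpair x hx]
    ring
  exact ⟨fun n => q.coeff n / 2, U.eval 1, fun x => by rw [← hconst x, hU]; ring⟩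

end Bernoulli

section Reciprocity

variable {K : Type*} [Field K] {w : ℕ} {g : MvPolynomial (Fin 2) K}

/-- The period relations satisfied by the reciprocity function
`g(h,k) = E(h,k) - E(k,-h)` of an even weighted Dedekind symbol `E` of weight `w`. -/
structure IsReciprocityPolynomial (w : ℕ) (g : MvPolynomial (Fin 2) K) : Prop where
  isHomogeneous : g.IsHomogeneous w
  antisymm : ∀ x y, eval ![y, x] g = -eval ![x, y] g
  three_term : ∀ x y, eval ![x, y] g = eval ![x, x + y] g + eval ![x + y, y] g

theorem eval_eq_pow_mul_eval_dehomogenization (hg : g.IsHomogeneous w) {x : K} (hx : x ≠ 0)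
    (y : K) : eval ![x, y] g = x ^ w * (dehomogenization g).eval (y / x) := by
  rw [eval_dehomogenization, ← eval_smul_of_isHomogeneous hg]
  simp [mul_div_cancel₀ y hx]

theorem natDegree_dehomogenization_le (hg : g.IsHomogeneous w) :
    (dehomogenization g).natDegree ≤ w := by
  have hvec : ∀ i, (![1, Polynomial.X] i : K[X]).natDegree ≤ 1 := by
    simp [Fin.forall_fin_two]
  exact (aeval_natDegree_le g hg.totalDegree_le _ hvec).trans_eq (mul_one w)

/-- The coboundary `V` of a reciprocity polynomial `g`: the homogenization of `V` satisfies
`V(x,y) - V(y,x) = g(x,y)`. -/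
noncomputable def reciprocityCoboundary (g : MvPolynomial (Fin 2) K) : K[X] :=
  Polynomial.C (1 / 3) * (dehomogenization g
    + (dehomogenization g).comp (Polynomial.X - Polynomial.C 1))

/-- The difference `q(X) = V(X + 1) - V(X)` for `V = reciprocityCoboundary g`; for a reciprocity
polynomial `g` it is odd and palindromic. -/
noncomputable def reciprocityDifference (g : MvPolynomial (Fin 2) K) : K[X] :=
  Polynomial.C (1 / 3) * ((dehomogenization g).comp (Polynomial.X + Polynomial.C 1)
    - (dehomogenization g).comp (Polynomial.X - Polynomial.C 1))

theorem eval_reciprocityCoboundary (g : MvPolynomial (Fin 2) K) (x : K) :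
    (reciprocityCoboundary g).eval x = (eval ![1, x] g + eval ![1, x - 1] g) / 3 := by
  simp [reciprocityCoboundary, eval_dehomogenization, div_eq_inv_mul]

theorem eval_reciprocityDifference (g : MvPolynomial (Fin 2) K) (x : K) :
    (reciprocityDifference g).eval x = (eval ![1, x + 1] g - eval ![1, x - 1] g) / 3 := by
  simp [reciprocityDifference, eval_dehomogenization, div_eq_inv_mul]

theorem eval_reciprocityCoboundary_add_one (g : MvPolynomial (Fin 2) K) (x : K) :
    (reciprocityCoboundary g).eval (x + 1) =
      (reciprocityCoboundary g).eval x + (reciprocityDifference g).eval x := by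
  rw [eval_reciprocityCoboundary, eval_reciprocityCoboundary, eval_reciprocityDifference,
    add_sub_cancel_right]
  ring

theorem pow_mul_eval_reciprocityCoboundary (hg : g.IsHomogeneous w) {x : K} (hx : x ≠ 0) (y : K) :
    x ^ w * (reciprocityCoboundary g).eval (y / x) =
      (eval ![x, y] g + eval ![x, y - x] g) / 3 := by
  rw [eval_eq_pow_mul_eval_dehomogenization hg hx, eval_eq_pow_mul_eval_dehomogenization hg hx,
    eval_dehomogenization, eval_dehomogenization, eval_reciprocityCoboundary, sub_div, div_self hx]
  ring

theorem pow_mul_eval_reciprocityDifference (hg : g.IsHomogeneous w) {x : K} (hx : x ≠ 0) (y : K) :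
    x ^ w * (reciprocityDifference g).eval (y / x) =
      (eval ![x, y + x] g - eval ![x, y - x] g) / 3 := by
  rw [eval_eq_pow_mul_eval_dehomogenization hg hx, eval_eq_pow_mul_eval_dehomogenization hg hx,
    eval_dehomogenization, eval_dehomogenization, eval_reciprocityDifference, sub_div y x,
    add_div y x, div_self hx]
  ring

theorem natDegree_reciprocityDifference_le (hg : g.IsHomogeneous w) :
    (reciprocityDifference g).natDegree ≤ w := by
  have hshift : ∀ a : K,
      ((dehomogenization g).comp (Polynomial.X + Polynomial.C a)).natDegree ≤ w := fun a => by
    rw [Polynomial.natDegree_comp, Polynomial.natDegree_X_add_C, mul_one]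
    exact natDegree_dehomogenization_le hg
  refine (Polynomial.natDegree_C_mul_le _ _).trans
    ((Polynomial.natDegree_sub_le_iff_left ?_).mpr (hshift 1))
  simpa [sub_eq_add_neg] using hshift (-1)

namespace IsReciprocityPolynomial

theorem eval_neg_neg (hg : IsReciprocityPolynomial w g) (hw : Even w) (x y : K) :
    eval ![-x, -y] g = eval ![x, y] g := by
  simpa [hw.neg_one_pow] using eval_smul_of_isHomogeneous hg.isHomogeneous (-1) ![x, y]

theorem eval_add_sub_eval_add (hg : IsReciprocityPolynomial w g) (x y : K) :
    eval ![x, y + x] g - eval ![y, x + y] g = eval ![x, y] g := by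
  rw [hg.three_term x y, hg.antisymm y (x + y), add_comm y x]
  ring

variable [CharZero K]

theorem eval_neg_right (hg : IsReciprocityPolynomial w g) (hw : Even w) (x y : K) :
    eval ![x, -y] g = eval ![x, y] g := by
  have hper : ∀ y, eval ![1, y + 1] g - eval ![1, -(y + 1)] g = eval ![1, y] g - eval ![1, -y] g :=
    fun y => by
      have h₁ := hg.three_term 1 y
      have h₂ := hg.three_term (y + 1) (-1)
      have h₃ := hg.eval_neg_neg hw 1 (-(y + 1))
      have h₄ := hg.eval_neg_neg hw 1 (-y)
      rw [neg_neg] at h₃ h₄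
      rw [add_comm 1 y] at h₁
      rw [add_neg_cancel_right] at h₂
      linear_combination -h₁ + h₂ + h₃ - h₄ - hg.antisymm (y + 1) (-1) + hg.antisymm y (-1)
  let p := dehomogenization g - (dehomogenization g).comp (-Polynomial.X)
  have hp : ∀ y, p.eval y = eval ![1, y] g - eval ![1, -y] g := fun y => by
    simp [p, eval_dehomogenization]
  have hodd : ∀ y, eval ![1, -y] g = eval ![1, y] g := fun y => by
    have hconst := eval_eq_eval_one_of_periodic (p := p) fun y _ => by rw [hp, hp, hper]
    have h₀ := (hconst y).trans (hconst 0).symm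
    rw [hp, hp, neg_zero, sub_self] at h₀
    exact (sub_eq_zero.mp h₀).symm
  rcases eq_or_ne x 0 with rfl | hx
  · simpa using hg.eval_neg_neg hw 0 y
  · rw [eval_eq_pow_mul_eval_dehomogenization hg.isHomogeneous hx,
      eval_eq_pow_mul_eval_dehomogenization hg.isHomogeneous hx, neg_div, eval_dehomogenization,
      eval_dehomogenization, hodd]

theorem eval_sub_sub_eval_sub (hg : IsReciprocityPolynomial w g) (hw : Even w) (x y : K) :
    eval ![x, y - x] g - eval ![y, x - y] g = eval ![x, y] g := by
  have h := hg.three_term x (y - x)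
  rw [add_sub_cancel] at h
  rw [h, ← neg_sub y x, hg.eval_neg_right hw, hg.antisymm (y - x) y]
  ring

theorem eval_neg_reciprocityDifference (hg : IsReciprocityPolynomial w g) (hw : Even w) (x : K) :
    (reciprocityDifference g).eval (-x) = -(reciprocityDifference g).eval x := by
  rw [eval_reciprocityDifference, eval_reciprocityDifference, neg_add_eq_sub, ← neg_sub x 1,
    ← neg_add', hg.eval_neg_right hw, hg.eval_neg_right hw]
  ring

theorem pow_mul_eval_inv_reciprocityDifference (hg : IsReciprocityPolynomial w g) (hw : Even w)
    {x : K} (hx : x ≠ 0) :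
    x ^ w * (reciprocityDifference g).eval x⁻¹ = (reciprocityDifference g).eval x := by
  rw [inv_eq_one_div, pow_mul_eval_reciprocityDifference hg.isHomogeneous hx,
    eval_reciprocityDifference]
  linear_combination
    (hg.eval_add_sub_eval_add x 1 - hg.eval_sub_sub_eval_sub hw x 1) / 3

theorem pow_mul_eval_reciprocityCoboundary_sub (hg : IsReciprocityPolynomial w g) (hw : Even w)
    {x y : K} (hx : x ≠ 0) (hy : y ≠ 0) :
    x ^ w * (reciprocityCoboundary g).eval (y / x)
        - y ^ w * (reciprocityCoboundary g).eval (x / y) = eval ![x, y] g := by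
  rw [pow_mul_eval_reciprocityCoboundary hg.isHomogeneous hx,
    pow_mul_eval_reciprocityCoboundary hg.isHomogeneous hy]
  linear_combination (hg.eval_sub_sub_eval_sub hw x y - hg.antisymm x y) / 3

theorem exists_eval_eq_sum_bernoulliPair (hg : IsReciprocityPolynomial w g) (hw : Even w) :
    ∃ (c : ℕ → K) (κ : K), ∀ x y, x ≠ 0 → y ≠ 0 →
      eval ![x, y] g = κ * (x ^ w - y ^ w) + ∑ n ∈ oddIndices w, c n *
        (x ^ w * (bernoulliPair K w n).eval (y / x)
          - y ^ w * (bernoulliPair K w n).eval (x / y)) := by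
  obtain ⟨c, κ, hV⟩ := exists_eval_eq_add_sum_bernoulliPair hw
    (eval_reciprocityCoboundary_add_one g) (natDegree_reciprocityDifference_le hg.isHomogeneous)
    (hg.eval_neg_reciprocityDifference hw)
    fun _ => hg.pow_mul_eval_inv_reciprocityDifference hw
  refine ⟨c, κ, fun x y hx hy => ?_⟩
  rw [← hg.pow_mul_eval_reciprocityCoboundary_sub hw hx hy, hV, hV]
  simp only [mul_sub, Finset.sum_sub_distrib, mul_add, Finset.mul_sum, mul_left_comm (c _)]
  ring

end IsReciprocityPolynomial

end Reciprocity

section DedekindSymbols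

theorem eq_apply_gcd_zero {α : Type*} {D : ℤ → ℤ → α}
    (hper : ∀ h k, 0 < h → D h (k + h) = D h k)
    (hsymm : ∀ h k, 0 < h → 0 < k → D h k = D k h) {h : ℤ} (hh : 0 < h) (k : ℤ) :
    D h k = D (Int.gcd h k) 0 := by
  have hmod : D h k = D h (k % h) := by
    have hD : Function.Periodic (D h) h := fun k => hper h k hh
    rw [Int.emod_def, mul_comm h, ← smul_eq_mul, hD.sub_zsmul_eq]
  have hgcd : Int.gcd h k = Int.gcd h (k % h) := by
    rw [Int.gcd_comm h (k % h), Int.gcd_emod, Int.gcd_comm]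
  rw [hmod, hgcd]
  rcases (Int.emod_nonneg k hh.ne').eq_or_lt with hr | hr
  · rw [← hr, Int.gcd_zero_right, Int.natCast_natAbs, abs_of_pos hh]
  · have := Int.emod_lt_of_pos k hh
    rw [hsymm h _ hh hr, Int.gcd_comm]
    exact eq_apply_gcd_zero hper hsymm hr h
termination_by h.toNat

variable {w : ℕ} {E : ℤ → ℤ → ℂ}

theorem IsDedekindSymbol.eq_mul_gcd_pow (hE : IsDedekindSymbol w E)
    (hsymm : ∀ h k, 0 < h → 0 < k → E h k = E k h) {h : ℤ} (hh : 0 < h) (k : ℤ) :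
    E h k = E 1 0 * (Int.gcd h k : ℂ) ^ w := by
  have hscale := hE.2 1 0 (Int.gcd h k) one_pos
    (Int.natCast_pos.mpr (Int.gcd_pos_of_ne_zero_left k hh.ne'))
  rw [mul_one, mul_zero, Int.cast_natCast] at hscale
  rw [eq_apply_gcd_zero hE.1 hsymm hh, hscale, mul_comm]

/-- The space of weighted Dedekind symbols of weight `w`. -/
def dedekindSymbols (w : ℕ) : Submodule ℂ (ℤ → ℤ → ℂ) where
  carrier := {E | IsDedekindSymbol w E}
  add_mem' hE hF :=
    ⟨fun h k hh => congr($(hE.1 h k hh) + $(hF.1 h k hh)), fun h k c hh hc =>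
      congr($(hE.2 h k c hh hc) + $(hF.2 h k c hh hc)).trans (mul_add _ _ _).symm⟩
  zero_mem' := ⟨fun _ _ _ => rfl, fun _ _ _ _ _ => (mul_zero _).symm⟩
  smul_mem' a _ hE :=
    ⟨fun h k hh => congr(a * $(hE.1 h k hh)), fun h k c hh hc =>
      congr(a * $(hE.2 h k c hh hc)).trans (mul_left_comm _ _ _)⟩

theorem isDedekindSymbol_pow_mul_comp_div (w : ℕ) {f : ℚ → ℂ} (hf : Function.Periodic f 1) :
    IsDedekindSymbol w fun h k => (h : ℂ) ^ w * f (k / h) := by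
  refine ⟨fun h k hh => ?_, fun h k c _ hc => ?_⟩ <;> dsimp only
  · have hh' : (h : ℚ) ≠ 0 := by exact_mod_cast hh.ne'
    rw [Int.cast_add, add_div, div_self hh', hf]
  · have hc' : (c : ℚ) ≠ 0 := by exact_mod_cast hc.ne'
    rw [Int.cast_mul, Int.cast_mul, Int.cast_mul, mul_div_mul_left _ _ hc', mul_pow, mul_assoc]

theorem IsDedekindSymbol.isReciprocityPolynomial {g : MvPolynomial (Fin 2) ℂ}
    (hE : IsDedekindSymbol w E) (heven : ∀ h k : ℤ, 0 < h → E h (-k) = E h k)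
    (hg : g.IsHomogeneous w)
    (hrec : ∀ h k : ℤ, 0 < h → 0 < k → E h k - E k (-h) = eval ![(h : ℂ), (k : ℂ)] g) :
    IsReciprocityPolynomial w g := by
  have heval : ∀ h k : ℤ, 0 < h → 0 < k → eval ![(h : ℂ), (k : ℂ)] g = E h k - E k h :=
    fun h k hh hk => by rw [← hrec h k hh hk, heven k h hk]
  have hcocycle : ∀ h k : ℤ, 0 < h → 0 < k →
      E h k - E k h = (E h (h + k) - E (h + k) h) + (E (h + k) k - E k (h + k)) :=
    fun h k hh hk => by
      have hreflect : E (h + k) h = E (h + k) k := by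
        rw [← heven (h + k) k (by positivity), ← hE.1 (h + k) (-k) (by positivity),
          neg_add_cancel_comm_assoc]
      rw [hreflect, hE.1 k h hk, add_comm h k, hE.1 h k hh]
      ring
  have hantisymm : (bind₁ ![X 1, X 0] g : MvPolynomial (Fin 2) ℂ) = -bind₁ ![X 0, X 1] g :=
    eq_of_forall_pos_int_eval_eq fun v hv => by
      simp only [map_neg, eval_bind₁_vec, eval_X]
      rw [heval _ _ (hv 1) (hv 0), heval _ _ (hv 0) (hv 1), neg_sub]
  have hthree : (bind₁ ![X 0, X 1] g : MvPolynomial (Fin 2) ℂ) =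
      bind₁ ![X 0, X 0 + X 1] g + bind₁ ![X 0 + X 1, X 1] g :=
    eq_of_forall_pos_int_eval_eq fun v hv => by
      have hpos := add_pos (hv 0) (hv 1)
      simp only [map_add, eval_bind₁_vec, eval_X, ← Int.cast_add]
      rw [heval _ _ (hv 0) (hv 1), heval _ _ (hv 0) hpos, heval _ _ hpos (hv 1),
        hcocycle _ _ (hv 0) (hv 1)]
  refine ⟨hg, fun x y => ?_, fun x y => ?_⟩
  · simpa [eval_bind₁_vec] using congr(eval ![x, y] $hantisymm)
  · simpa [eval_bind₁_vec] using congr(eval ![x, y] $hthree)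

end DedekindSymbols

section SeparatingQuadruples

/-- The quadruples `(a,b,c,d) ∈ ℤ⁴` with `ad - bc = 1` for which `k/h` lies strictly between
`-b/a` and `-d/c`; as `a(ck + dh) - c(ak + bh) = h`, this pins down the signs of both products. -/
def separatingSet (h k : ℤ) : Set (ℤ × ℤ × ℤ × ℤ) :=
  {(a, b, c, d) | a * d - b * c = 1 ∧ 0 < a * (c * k + d * h) ∧ c * (a * k + b * h) < 0}

/-- The representatives with `a > 0` of the separating quadruples modulo `±1`. -/
def posSeparatingSet (h k : ℤ) : Set (ℤ × ℤ × ℤ × ℤ) := {p ∈ separatingSet h k | 0 < p.1}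

/-- The contribution `|ak + bh|^m |ck + dh|^n` of a quadruple `(a,b,c,d)` to the sum
`I_{m+n,n}(h,k)`. -/
def separatingTerm (m n : ℕ) (h k : ℤ) : ℤ × ℤ × ℤ × ℤ → ℂ
  | (a, b, c, d) => ((|a * k + b * h| ^ m * |c * k + d * h| ^ n : ℤ) : ℂ)

variable {h k a b c d : ℤ}

theorem mem_separatingSet : (a, b, c, d) ∈ separatingSet h k ↔
    a * d - b * c = 1 ∧ 0 < a * (c * k + d * h) ∧ c * (a * k + b * h) < 0 := Iff.rfl

theorem mem_posSeparatingSet : (a, b, c, d) ∈ posSeparatingSet h k ↔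
    a * d - b * c = 1 ∧ 0 < a ∧ 0 < c * k + d * h ∧ c * (a * k + b * h) < 0 := by
  simp only [posSeparatingSet, Set.mem_sep_iff, mem_separatingSet]
  constructor
  · rintro ⟨⟨hdet, hC, hA⟩, ha⟩
    exact ⟨hdet, ha, pos_of_mul_pos_right hC ha.le, hA⟩
  · rintro ⟨hdet, ha, hC, hA⟩
    exact ⟨⟨hdet, mul_pos ha hC, hA⟩, ha⟩

theorem mul_sub_mul_eq_of_det_eq_one (hdet : a * d - b * c = 1) :
    a * (c * k + d * h) - c * (a * k + b * h) = h := by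
  linear_combination h * hdet

theorem ne_zero_of_mem_separatingSet (hp : (a, b, c, d) ∈ separatingSet h k) :
    (a ≠ 0 ∧ c * k + d * h ≠ 0) ∧ c ≠ 0 ∧ a * k + b * h ≠ 0 :=
  ⟨mul_ne_zero_iff.mp hp.2.1.ne', mul_ne_zero_iff.mp hp.2.2.ne⟩

theorem abs_lt_of_mem_separatingSet (hp : (a, b, c, d) ∈ separatingSet h k) :
    |a| < h ∧ |c| < h ∧ |a * k + b * h| < h ∧ |c * k + d * h| < h := by
  obtain ⟨⟨ha, hC⟩, hc, hA⟩ := ne_zero_of_mem_separatingSet hp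
  obtain ⟨hdet, haC, hcA⟩ := hp
  have hsum : |a| * |c * k + d * h| + |c| * |a * k + b * h| = h := by
    rw [← abs_mul, ← abs_mul, abs_of_pos haC, abs_of_neg hcA, ← sub_eq_add_neg,
      mul_sub_mul_eq_of_det_eq_one hdet]
  have := Int.one_le_abs ha
  have := Int.one_le_abs hC
  have := Int.one_le_abs hc
  have := Int.one_le_abs hA
  refine ⟨?_, ?_, ?_, ?_⟩ <;> nlinarith

theorem finite_separatingSet (hh : 0 < h) (k : ℤ) : (separatingSet h k).Finite := by
  have hI := Set.finite_Icc (-h) h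
  refine Set.Finite.of_finite_image (f := fun (a, b, c, d) =>
    (a, a * k + b * h, c, c * k + d * h)) ((hI.prod (hI.prod (hI.prod hI))).subset ?_) ?_
  · rintro _ ⟨⟨a, b, c, d⟩, hp, rfl⟩
    obtain ⟨ha, hc, hA, hC⟩ := abs_lt_of_mem_separatingSet hp
    exact ⟨abs_le.mp ha.le, abs_le.mp hA.le, abs_le.mp hc.le, abs_le.mp hC.le⟩
  · rintro ⟨a, b, c, d⟩ - ⟨a', b', c', d'⟩ - heq
    simp only [Prod.mk.injEq] at heq
    obtain ⟨rfl, hb, rfl, hd⟩ := heq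
    rw [mul_right_cancel₀ hh.ne' (add_left_cancel hb),
      mul_right_cancel₀ hh.ne' (add_left_cancel hd)]

theorem finite_posSeparatingSet (hh : 0 < h) (k : ℤ) : (posSeparatingSet h k).Finite :=
  (finite_separatingSet hh k).subset (Set.sep_subset _ _)

theorem neg_mem_separatingSet_iff :
    -(a, b, c, d) ∈ separatingSet h k ↔ (a, b, c, d) ∈ separatingSet h k := by
  have hneg : ∀ x y z : ℤ, -z * (-x * k + -y * h) = z * (x * k + y * h) := fun x y z => by ring
  simp only [Prod.neg_mk, mem_separatingSet, hneg, neg_mul_neg]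

theorem separatingTerm_neg (m n : ℕ) (h k : ℤ) (p : ℤ × ℤ × ℤ × ℤ) :
    separatingTerm m n h k (-p) = separatingTerm m n h k p := by
  obtain ⟨a, b, c, d⟩ := p
  simp only [separatingTerm, neg_mul, ← neg_add, abs_neg]

theorem separatingSet_eq_union_neg (h k : ℤ) :
    separatingSet h k = posSeparatingSet h k ∪ -posSeparatingSet h k := by
  ext ⟨a, b, c, d⟩
  simp only [Set.mem_union, Set.mem_neg, posSeparatingSet, Set.mem_sep_iff,
    neg_mem_separatingSet_iff, Prod.fst_neg, neg_pos, ← and_or_left]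
  exact (and_iff_left_of_imp fun hp => (ne_zero_of_mem_separatingSet hp).1.1.symm.lt_or_gt).symm

theorem finsum_mem_separatingSet (m n : ℕ) (hh : 0 < h) (k : ℤ) :
    ∑ᶠ p ∈ separatingSet h k, separatingTerm m n h k p =
      2 * ∑ᶠ p ∈ posSeparatingSet h k, separatingTerm m n h k p := by
  have hdisj : Disjoint (posSeparatingSet h k) (-posSeparatingSet h k) :=
    Set.disjoint_left.mpr fun p hp hp' => (neg_pos.mp hp'.2).not_gt hp.2
  have hfin := finite_posSeparatingSet hh k
  rw [separatingSet_eq_union_neg, finsum_mem_union hdisj hfin hfin.neg, ← Set.image_neg_eq_neg,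
    finsum_mem_image neg_injective.injOn]
  simp only [separatingTerm_neg]
  ring

theorem abs_add_floor_add_half_mul_le {R : Type*} [Field R] [LinearOrder R] [IsStrictOrderedRing R]
    [FloorRing R] {x : R} {a b : ℤ} (hab : |a * x + b| < 1) :
    |b + ⌊x + 1 / 2⌋ * a| ≤ |a| := by
  rw [← round_eq]
  have htri : |(b + round x * a : R)| ≤ |a * x + b| + |(a : R)| * |x - round x| := by
    rw [← abs_mul]
    refine (abs_sub _ _).trans_eq' ?_
    ring_nf
  have hlt : |(b + round x * a : R)| < |(a : R)| + 1 := by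
    nlinarith [abs_sub_round x, abs_nonneg (a : R)]
  exact Int.lt_add_one_iff.mp (by exact_mod_cast hlt)

theorem intCast_div_add_div {K : Type*} [Field K] [CharZero K] (hh : h ≠ 0) (ha : a ≠ 0) :
    (k : K) / h + b / a = (a * k + b * h : ℤ) / (a * h : ℤ) := by
  have : (h : K) ≠ 0 := Int.cast_ne_zero.mpr hh
  have : (a : K) ≠ 0 := Int.cast_ne_zero.mpr ha
  push_cast
  field_simp

theorem div_add_div_mul_neg_iff (hh : 0 < h) (hdet : a * d - b * c = 1) (ha : a ≠ 0) (hc : c ≠ 0) :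
    ((k : ℚ) / h + b / a) * ((k : ℚ) / h + d / c) < 0 ↔
      0 < a * (c * k + d * h) ∧ c * (a * k + b * h) < 0 := by
  have hprod : ((k : ℚ) / h + b / a) * ((k : ℚ) / h + d / c) =
      ((a * (c * k + d * h)) * (c * (a * k + b * h)) : ℤ) / ((a * c * h : ℤ) : ℚ) ^ 2 := by
    have : (h : ℚ) ≠ 0 := Int.cast_ne_zero.mpr hh.ne'
    have : (a : ℚ) ≠ 0 := Int.cast_ne_zero.mpr ha
    have : (c : ℚ) ≠ 0 := Int.cast_ne_zero.mpr hc
    push_cast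
    field_simp
  have hsq : (0 : ℚ) < ((a * c * h : ℤ) : ℚ) ^ 2 := by positivity
  have hdiff := mul_sub_mul_eq_of_det_eq_one (h := h) (k := k) hdet
  rw [hprod, div_lt_iff₀ hsq, zero_mul, Int.cast_lt_zero, mul_neg_iff]
  exact or_iff_left_of_imp fun hneg => by linarith [hneg.1, hneg.2]

theorem Iwn_condition_iff (hh : 0 < h) :
    (a * d - b * c = 1 ∧ a ≠ 0 ∧ c ≠ 0 ∧
        |b + ⌊(k : ℚ) / h + 1 / 2⌋ * a| ≤ |a| ∧ |a| ≤ h ∧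
        |d + ⌊(k : ℚ) / h + 1 / 2⌋ * c| ≤ |c| ∧ |c| ≤ h ∧
        ((k : ℚ) / h + b / a) * ((k : ℚ) / h + d / c) < 0) ↔
      (a, b, c, d) ∈ separatingSet h k := by
  constructor
  · rintro ⟨hdet, ha, hc, -, -, -, -, hsign⟩
    exact ⟨hdet, (div_add_div_mul_neg_iff hh hdet ha hc).mp hsign⟩
  · intro hp
    have hnear : ∀ x y : ℤ, |x * k + y * h| < h → |(x * ((k : ℚ) / h) + y : ℚ)| < 1 :=
      fun x y hxy => by
        have hh' : (0 : ℚ) < h := Int.cast_pos.mpr hh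
        rw [← mul_div_assoc, div_add' _ _ _ hh'.ne', abs_div, abs_of_pos hh', div_lt_one hh']
        exact_mod_cast hxy
    obtain ⟨⟨ha, -⟩, hc, -⟩ := ne_zero_of_mem_separatingSet hp
    obtain ⟨hah, hch, hA, hC⟩ := abs_lt_of_mem_separatingSet hp
    exact ⟨hp.1, ha, hc, abs_add_floor_add_half_mul_le (hnear a b hA), hah.le,
      abs_add_floor_add_half_mul_le (hnear c d hC), hch.le,
      (div_add_div_mul_neg_iff hh hp.1 ha hc).mpr hp.2⟩

theorem sign_mul_pow_of_odd {n : ℕ} (hn : Odd n) (z : ℤ) : z.sign * z ^ n = |z| ^ n := by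
  obtain ⟨m, rfl⟩ := hn
  rw [pow_succ, pow_succ, pow_mul, pow_mul, sq_abs, mul_left_comm, Int.sign_mul_self_eq_abs]

theorem real_sign_mul (x y : ℝ) : Real.sign (x * y) = Real.sign x * Real.sign y := by
  rcases lt_trichotomy x 0 with hx | rfl | hx <;> rcases lt_trichotomy y 0 with hy | rfl | hy <;>
    simp [Real.sign_of_neg, Real.sign_of_pos, mul_pos_of_neg_of_neg, mul_neg_of_neg_of_pos,
      mul_neg_of_pos_of_neg, *]

theorem sign_div_add_div (hh : 0 < h) (hp : (a, b, c, d) ∈ separatingSet h k) :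
    Real.sign ((k : ℝ) / h + b / a) = ((a * k + b * h).sign * (c * k + d * h).sign : ℤ) := by
  obtain ⟨⟨ha, -⟩, -, -⟩ := ne_zero_of_mem_separatingSet hp
  have hsign : (a * h).sign = (c * k + d * h).sign := by
    have := Int.sign_eq_one_of_pos hp.2.1
    rw [Int.sign_mul] at this ⊢
    grind
  rw [intCast_div_add_div hh.ne' ha, div_eq_mul_inv, real_sign_mul, Real.sign_inv,
    Real.sign_intCast, Real.sign_intCast, hsign, Int.cast_mul]

theorem Iwn_eq_finsum_mem_posSeparatingSet {w n : ℕ} (hn : Odd n) (hwn : Odd (w - n)) (hh : 0 < h)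
    (k : ℤ) :
    Iwn w n h k = ∑ᶠ p ∈ posSeparatingSet h k, separatingTerm (w - n) n h k p := by
  have hsum : Iwn w n h k = 1 / 2 * ∑ᶠ p ∈ separatingSet h k, separatingTerm (w - n) n h k p := by
    rw [Iwn]
    refine congrArg _ (finsum_congr fun ⟨a, b, c, d⟩ => ?_)
    rw [finsum_eq_if]
    refine ite_congr (propext (Iwn_condition_iff hh)) (fun hp => ?_) fun _ => rfl
    rw [sign_div_add_div hh hp, separatingTerm, ← sign_mul_pow_of_odd hn, ← sign_mul_pow_of_odd hwn]
    push_cast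
    ring
  rw [hsum, finsum_mem_separatingSet _ _ hh]
  ring

end SeparatingQuadruples

section EwnSymbols

variable {h k c : ℤ} {w n : ℕ}

theorem finsum_mem_posSeparatingSet_add (m n : ℕ) (h k : ℤ) :
    ∑ᶠ p ∈ posSeparatingSet h (k + h), separatingTerm m n h (k + h) p =
      ∑ᶠ p ∈ posSeparatingSet h k, separatingTerm m n h k p := by
  have hlin : ∀ x y : ℤ, x * (k + h) + y * h = x * k + (y + x) * h := fun x y => by ring
  refine finsum_mem_eq_of_bijOn (fun (a, b, c, d) => (a, b + a, c, d + c)) ?_ ?_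
  · refine Set.InvOn.bijOn (f' := fun (a, b, c, d) => (a, b - a, c, d - c)) ?_ ?_ ?_
    · constructor <;> rintro ⟨a, b, c, d⟩ - <;> simp
    · rintro ⟨a, b, c, d⟩ hp
      rw [mem_posSeparatingSet, hlin, hlin] at hp
      exact mem_posSeparatingSet.mpr ⟨by linear_combination hp.1, hp.2⟩
    · rintro ⟨a, b, c, d⟩ hp
      rw [mem_posSeparatingSet] at hp
      rw [mem_posSeparatingSet, hlin, hlin, sub_add_cancel, sub_add_cancel]
      exact ⟨by linear_combination hp.1, hp.2⟩
  · rintro ⟨a, b, c, d⟩ -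
    simp only [separatingTerm, hlin]

theorem posSeparatingSet_mul (hc : 0 < c) (h k : ℤ) :
    posSeparatingSet (c * h) (c * k) = posSeparatingSet h k := by
  have hlin : ∀ x y : ℤ, x * (c * k) + y * (c * h) = c * (x * k + y * h) := fun x y => by ring
  have hneg : ∀ x y : ℤ, x * (c * y) < 0 ↔ x * y < 0 := fun x y => by
    rw [mul_left_comm, ← smul_eq_mul c, smul_neg_iff_of_pos_left hc]
  ext ⟨x, y, z, t⟩
  simp only [mem_posSeparatingSet, hlin, mul_pos_iff_of_pos_left hc, hneg]

theorem separatingTerm_mul (m n : ℕ) (hc : 0 < c) (h k : ℤ) (p : ℤ × ℤ × ℤ × ℤ) :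
    separatingTerm m n (c * h) (c * k) p = c ^ (m + n) * separatingTerm m n h k p := by
  have hlin : ∀ x y : ℤ, x * (c * k) + y * (c * h) = c * (x * k + y * h) := fun x y => by ring
  obtain ⟨x, y, z, t⟩ := p
  simp only [separatingTerm, hlin, abs_mul, abs_of_pos hc]
  push_cast
  ring

theorem isDedekindSymbol_Iwn (hnw : n ≤ w) (hn : Odd n) (hwn : Odd (w - n)) :
    IsDedekindSymbol w (Iwn w n) := by
  refine ⟨fun h k hh => ?_, fun h k c hh hc => ?_⟩
  · rw [Iwn_eq_finsum_mem_posSeparatingSet hn hwn hh, Iwn_eq_finsum_mem_posSeparatingSet hn hwn hh,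
      finsum_mem_posSeparatingSet_add]
  · rw [Iwn_eq_finsum_mem_posSeparatingSet hn hwn (mul_pos hc hh),
      Iwn_eq_finsum_mem_posSeparatingSet hn hwn hh, posSeparatingSet_mul hc]
    simp only [separatingTerm_mul _ _ hc, Nat.sub_add_cancel hnw]
    rw [mul_finsum_mem]

/-- The coefficient of `h^w` in `E_{w,n}` that does not depend on `k`. -/
noncomputable def EwnConstant (w n : ℕ) : ℂ :=
  ((w : ℂ) + 2) / Bnum (w + 2) * (Bnum (n + 1) / ((n : ℂ) + 1))
    * (Bnum (w - n + 1) / (((w - n : ℕ) : ℂ) + 1))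

theorem eval_bernoulliAntidifference_fract (n : ℕ) (x : ℚ) :
    (bernoulliAntidifference ℂ n).eval ((Int.fract x : ℚ) : ℂ) = Bbar (n + 1) x / (n + 1) := by
  rw [bernoulliAntidifference, Bbar, Polynomial.eval_mul, Polynomial.eval_C,
    Int.self_sub_floor, one_div_mul_eq_div]
  exact congr($(Polynomial.eval_map_apply (algebraMap ℚ ℂ) (Int.fract x)) / _)

theorem EwnOdd_eq (w n : ℕ) (h k : ℤ) :
    EwnOdd w n h k = Iwn w n h k + (h : ℂ) ^ w *
      (EwnConstant w n - (bernoulliPair ℂ w n).eval ((Int.fract (k / h : ℚ) : ℚ) : ℂ)) := by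
  rw [EwnOdd, EwnConstant, bernoulliPair, Polynomial.eval_add, eval_bernoulliAntidifference_fract,
    eval_bernoulliAntidifference_fract]
  ring

theorem isDedekindSymbol_EwnOdd (hnw : n ≤ w) (hn : Odd n) (hwn : Odd (w - n)) :
    IsDedekindSymbol w (EwnOdd w n) := by
  have hf : Function.Periodic (fun x : ℚ =>
      EwnConstant w n - (bernoulliPair ℂ w n).eval ((Int.fract x : ℚ) : ℂ)) 1 := fun x => by
    simp only [Int.fract_add_one]
  have heq : EwnOdd w n = Iwn w n + _ := funext₂ (EwnOdd_eq w n)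
  rw [heq]
  exact (dedekindSymbols w).add_mem (isDedekindSymbol_Iwn hnw hn hwn)
    (isDedekindSymbol_pow_mul_comp_div w hf)

end EwnSymbols

section SwapReciprocity

/-- Right and left multiplication of `(a,b,c,d)` by antidiagonal and diagonal matrices of
determinant `-1`, exchanging the roles of `h` and `k`. -/
def quadrupleSwap : ℤ × ℤ × ℤ × ℤ → ℤ × ℤ × ℤ × ℤ
  | (a, b, c, d) => (-b, -a, d, c)

/-- The separating quadruples for `(h,k)` that do not cancel against those for `(k,h)` in the
reciprocity function of `I_{w,n}`. -/
def residualSet (h k : ℤ) : Set (ℤ × ℤ × ℤ × ℤ) :=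
  posSeparatingSet h k \ quadrupleSwap ⁻¹' posSeparatingSet k h

variable {h k a b c d : ℤ} {w n : ℕ}

theorem quadrupleSwap_involutive : Function.Involutive quadrupleSwap := fun (a, b, c, d) => by
  simp only [quadrupleSwap, neg_neg]

theorem separatingTerm_quadrupleSwap (m n : ℕ) (h k : ℤ) (p : ℤ × ℤ × ℤ × ℤ) :
    separatingTerm m n k h (quadrupleSwap p) = separatingTerm m n h k p := by
  obtain ⟨a, b, c, d⟩ := p
  have hfst : -b * h + -a * k = -(a * k + b * h) := by ring
  simp only [quadrupleSwap, separatingTerm, hfst, abs_neg, add_comm (d * h)]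

theorem finsum_mem_posSeparatingSet_sub_swap (m n : ℕ) (hh : 0 < h) (hk : 0 < k) :
    ∑ᶠ p ∈ posSeparatingSet h k, separatingTerm m n h k p
        - ∑ᶠ p ∈ posSeparatingSet k h, separatingTerm m n k h p =
      ∑ᶠ p ∈ residualSet h k, separatingTerm m n h k p
        - ∑ᶠ p ∈ residualSet k h, separatingTerm m n k h p := by
  have hmaps : ∀ h k, Set.MapsTo quadrupleSwap
      (posSeparatingSet h k ∩ quadrupleSwap ⁻¹' posSeparatingSet k h)
      (posSeparatingSet k h ∩ quadrupleSwap ⁻¹' posSeparatingSet h k) := fun h k p hp =>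
    ⟨hp.2, by simpa only [Set.mem_preimage, quadrupleSwap_involutive p] using hp.1⟩
  have hcancel := finsum_mem_eq_of_bijOn quadrupleSwap
    (Set.InvOn.bijOn ⟨quadrupleSwap_involutive.leftInverse.leftInvOn _,
      quadrupleSwap_involutive.rightInverse.rightInvOn _⟩ (hmaps h k) (hmaps k h))
    fun p _ => (separatingTerm_quadrupleSwap m n h k p).symm
  rw [← finsum_mem_inter_add_sdiff (quadrupleSwap ⁻¹' posSeparatingSet k h)
      (finite_posSeparatingSet hh k),
    ← finsum_mem_inter_add_sdiff (quadrupleSwap ⁻¹' posSeparatingSet h k)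
      (finite_posSeparatingSet hk h), hcancel, add_sub_add_left_eq_sub, residualSet, residualSet]

theorem eq_of_mem_posSeparatingSet_of_nonneg (hh : 0 < h) (hk : 0 < k)
    (hp : (a, b, c, d) ∈ posSeparatingSet h k) (hb : 0 ≤ b) :
    a = 1 ∧ b = 0 ∧ d = 1 ∧ c < 0 := by
  obtain ⟨hdet, ha, hC, hcA⟩ := mem_posSeparatingSet.mp hp
  have hc : c < 0 := neg_of_mul_neg_left hcA (by positivity)
  have hd : 0 < d := by nlinarith
  have hb' : b = 0 := by nlinarith
  subst hb'
  have had : a * d = 1 := by linarith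
  have ha' := Int.eq_one_of_mul_eq_one_right ha.le had
  subst ha'
  exact ⟨rfl, rfl, by linarith, hc⟩

theorem eq_of_mem_residualSet_of_neg (hh : 0 < h) (hk : 0 < k)
    (hp : (a, b, c, d) ∈ residualSet h k) (hb : b < 0) :
    b = -1 ∧ c = 1 ∧ d = 0 := by
  obtain ⟨hpos, hswap⟩ := hp
  obtain ⟨hdet, ha, hC, hcA⟩ := mem_posSeparatingSet.mp hpos
  have hdA : d * (a * k + b * h) ≤ 0 := by
    refine not_lt.mp fun hdA => hswap (mem_posSeparatingSet.mpr ⟨?_, ?_, ?_, ?_⟩) <;> linarith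
  have hA : a * k + b * h < 0 := by
    by_contra! hA
    have hc : c < 0 := neg_of_mul_neg_left hcA hA
    have hd : d ≤ 0 := by nlinarith
    nlinarith
  have hc : 0 < c := by nlinarith
  have hd : 0 ≤ d := by nlinarith
  have hd' : d = 0 := by nlinarith
  subst hd'
  have hbc : c * -b = 1 := by linarith
  have hc' := Int.eq_one_of_mul_eq_one_right hc.le hbc
  subst hc'
  exact ⟨by linarith, rfl, rfl⟩

theorem residualSet_eq (hh : 0 < h) (hk : 0 < k) :
    residualSet h k =
      (fun j : ℕ => ((1 : ℤ), (0 : ℤ), -(j : ℤ), (1 : ℤ))) '' {j : ℕ | 0 < j ∧ j * k < h} ∪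
      (fun j : ℕ => ((j : ℤ), (-1 : ℤ), (1 : ℤ), (0 : ℤ))) '' {j : ℕ | 0 < j ∧ j * k < h} := by
  ext ⟨a, b, c, d⟩
  constructor
  · intro hp
    obtain ⟨-, ha, hC, hcA⟩ := mem_posSeparatingSet.mp hp.1
    rcases le_or_gt 0 b with hb | hb
    · obtain ⟨rfl, rfl, rfl, hc⟩ := eq_of_mem_posSeparatingSet_of_nonneg hh hk hp.1 hb
      lift -c to ℕ using by lia with j hj
      obtain rfl : c = -j := by lia
      exact .inl ⟨j, ⟨by lia, by linarith⟩, rfl⟩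
    · obtain ⟨rfl, rfl, rfl⟩ := eq_of_mem_residualSet_of_neg hh hk hp hb
      lift a to ℕ using ha.le
      exact .inr ⟨a, ⟨by lia, by linarith⟩, rfl⟩
  · rintro (⟨j, ⟨hj, hjk⟩, hp⟩ | ⟨j, ⟨hj, hjk⟩, hp⟩) <;> obtain ⟨rfl, rfl, rfl, rfl⟩ := hp <;>
      simp only [residualSet, quadrupleSwap, Set.mem_sdiff, Set.mem_preimage, mem_posSeparatingSet]
    · exact ⟨⟨by lia, by lia, by linarith, by nlinarith⟩, by lia⟩
    · exact ⟨⟨by lia, by lia, by linarith, by linarith⟩, by lia⟩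

theorem finsum_mem_residualSet {m n : ℕ} (hm : m ≠ 0) (hn : n ≠ 0) (hh : 0 < h) (hk : 0 < k) :
    ∑ᶠ p ∈ residualSet h k, separatingTerm m n h k p =
      ∑ j ∈ Finset.Icc 1 ⌊(h / k : ℚ)⌋₊,
        ((k : ℂ) ^ m * (h - j * k) ^ n + (h - j * k) ^ m * (k : ℂ) ^ n) := by
  have hk' : (0 : ℚ) < k := Int.cast_pos.mpr hk
  let s : Set ℕ := {j : ℕ | 0 < j ∧ j * k < h}
  have hle : ∀ j : ℕ, j ∈ Finset.Icc 1 ⌊(h / k : ℚ)⌋₊ ↔ 0 < j ∧ j * k ≤ h := fun j => by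
    rw [Finset.mem_Icc, Nat.le_floor_iff (by positivity), le_div_iff₀ hk']
    exact and_congr Iff.rfl (by exact_mod_cast Iff.rfl)
  have hs : s.Finite := (Finset.Icc 1 ⌊(h / k : ℚ)⌋₊).finite_toSet.subset fun j hj =>
    (hle j).mpr ⟨hj.1, hj.2.le⟩
  have hterm : ∀ j ∈ s,
      separatingTerm m n h k (1, 0, -j, 1) + separatingTerm m n h k (j, -1, 1, 0) =
        (k : ℂ) ^ m * (h - j * k) ^ n + (h - j * k) ^ m * (k : ℂ) ^ n := fun j ⟨_, hj⟩ => by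
    have hpos : |h - j * k| = h - j * k := abs_of_pos (sub_pos.mpr hj)
    have hneg : |(j : ℤ) * k - h| = h - j * k := by rw [abs_sub_comm, hpos]
    simp [separatingTerm, neg_add_eq_sub, ← sub_eq_add_neg, hpos, hneg, abs_of_pos hk]
  have hdisj : Disjoint ((fun j : ℕ => ((1 : ℤ), (0 : ℤ), -(j : ℤ), (1 : ℤ))) '' s)
      ((fun j : ℕ => ((j : ℤ), (-1 : ℤ), (1 : ℤ), (0 : ℤ))) '' s) := by
    rw [Set.disjoint_left]
    rintro _ ⟨i, -, rfl⟩ ⟨j, -, hij⟩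
    simp at hij
  rw [residualSet_eq hh hk, finsum_mem_union hdisj (hs.image _) (hs.image _),
    finsum_mem_image (fun i _ j _ hij => by simpa using hij),
    finsum_mem_image (fun i _ j _ hij => by simpa using hij), ← finsum_mem_add_distrib hs,
    finsum_mem_congr rfl hterm]
  refine finsum_mem_eq_sum_of_inter_support_eq _ (Set.ext fun j => ?_)
  rw [Set.mem_inter_iff, Set.mem_inter_iff, Finset.mem_coe, hle]
  refine and_congr_left fun hj => ⟨fun hj' => ⟨hj'.1, hj'.2.le⟩, fun hj' => ⟨hj'.1, ?_⟩⟩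
  refine hj'.2.lt_of_ne fun heq => hj ?_
  have heq' : (h : ℂ) = j * k := by exact_mod_cast heq.symm
  simp [heq', hm, hn]

theorem finsum_mem_residualSet_eq_bernoulliPair (hn : Odd n) (hwn : Odd (w - n)) (hnw : n ≤ w)
    (hh : 0 < h) (hk : 0 < k) :
    ∑ᶠ p ∈ residualSet h k, separatingTerm (w - n) n h k p =
      (k : ℂ) ^ w * ((bernoulliPair ℂ w n).eval (h / k : ℂ)
        - (bernoulliPair ℂ w n).eval ((Int.fract (h / k : ℚ) : ℚ) : ℂ)) := by
  have hk' : (k : ℂ) ≠ 0 := Int.cast_ne_zero.mpr hk.ne'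
  have hterm : ∀ j : ℕ, (k : ℂ) ^ (w - n) * (h - j * k) ^ n + (h - j * k) ^ (w - n) * (k : ℂ) ^ n =
      (k : ℂ) ^ w * ((h / k - j) ^ n + (h / k - j) ^ (w - n)) := fun j => by
    have hscale : (h - j * k : ℂ) = k * (h / k - j) := by field_simp
    rw [hscale, mul_pow, mul_pow, ← pow_sub_mul_pow (k : ℂ) hnw]
    ring
  have hfract : ((Int.fract (h / k : ℚ) : ℚ) : ℂ) = h / k - (⌊(h / k : ℚ)⌋₊ : ℂ) := by
    rw [Int.fract, ← natCast_floor_eq_intCast_floor (by positivity)]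
    push_cast
    rfl
  rw [finsum_mem_residualSet hwn.pos.ne' hn.pos.ne' hh hk, Finset.sum_congr rfl fun j _ => hterm j,
    ← Finset.mul_sum, Finset.sum_add_distrib, sum_Icc_sub_pow, sum_Icc_sub_pow, hfract]
  simp only [bernoulliPair, Polynomial.eval_add]
  ring

theorem EwnOdd_sub_swap (hn : Odd n) (hwn : Odd (w - n)) (hnw : n ≤ w) (hh : 0 < h) (hk : 0 < k) :
    EwnOdd w n h k - EwnOdd w n k h =
      EwnConstant w n * ((h : ℂ) ^ w - (k : ℂ) ^ w)
        - ((h : ℂ) ^ w * (bernoulliPair ℂ w n).eval (k / h : ℂ)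
          - (k : ℂ) ^ w * (bernoulliPair ℂ w n).eval (h / k : ℂ)) := by
  have hI := finsum_mem_posSeparatingSet_sub_swap (w - n) n hh hk
  rw [← Iwn_eq_finsum_mem_posSeparatingSet hn hwn hh,
    ← Iwn_eq_finsum_mem_posSeparatingSet hn hwn hk,
    finsum_mem_residualSet_eq_bernoulliPair hn hwn hnw hh hk,
    finsum_mem_residualSet_eq_bernoulliPair hn hwn hnw hk hh] at hI
  rw [EwnOdd_eq, EwnOdd_eq]
  linear_combination hI

end SwapReciprocity

section LinearCombination

variable {w : ℕ} {g : MvPolynomial (Fin 2) ℂ}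

theorem IsReciprocityPolynomial.exists_sum_EwnOdd_sub_swap (hg : IsReciprocityPolynomial w g)
    (hw : Even w) :
    ∃ (c : ℕ → ℂ) (a : ℂ), ∀ h k : ℤ, 0 < h → 0 < k →
      ∑ n ∈ oddIndices w, c n * (EwnOdd w n h k - EwnOdd w n k h)
        + a * ((h : ℂ) ^ w - (k : ℂ) ^ w) = eval ![(h : ℂ), (k : ℂ)] g := by
  obtain ⟨c, κ, hc⟩ := hg.exists_eval_eq_sum_bernoulliPair hw
  refine ⟨-c, κ + ∑ n ∈ oddIndices w, c n * EwnConstant w n, fun h k hh hk => ?_⟩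
  have hswap : ∀ n ∈ oddIndices w, (-c) n * (EwnOdd w n h k - EwnOdd w n k h) =
      c n * ((h : ℂ) ^ w * (bernoulliPair ℂ w n).eval (k / h : ℂ)
          - (k : ℂ) ^ w * (bernoulliPair ℂ w n).eval (h / k : ℂ))
        - c n * EwnConstant w n * ((h : ℂ) ^ w - (k : ℂ) ^ w) := fun n hn => by
    obtain ⟨hn, hwn, hnw⟩ := (mem_oddIndices_iff hw).mp hn
    rw [EwnOdd_sub_swap hn hwn hnw hh hk, Pi.neg_apply]
    ring
  rw [hc h k (Int.cast_ne_zero.mpr hh.ne') (Int.cast_ne_zero.mpr hk.ne'),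
    Finset.sum_congr rfl hswap, Finset.sum_sub_distrib, ← Finset.sum_mul]
  ring

theorem isDedekindSymbol_sub_sum_EwnOdd {E : ℤ → ℤ → ℂ} (hE : IsDedekindSymbol w E) (hw : Even w)
    (c : ℕ → ℂ) (a : ℂ) :
    IsDedekindSymbol w fun h k =>
      E h k - ((∑ n ∈ oddIndices w, c n * EwnOdd w n h k) + a * (h : ℂ) ^ w) := by
  have hF : (fun h _ : ℤ => (h : ℂ) ^ w * a) ∈ dedekindSymbols w :=
    isDedekindSymbol_pow_mul_comp_div w (f := fun _ => a) fun _ => rfl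
  have hsum : ∑ n ∈ oddIndices w, c n • EwnOdd w n ∈ dedekindSymbols w :=
    Submodule.sum_mem _ fun n hn => Submodule.smul_mem _ _ <|
      have ⟨hn, hwn, hnw⟩ := (mem_oddIndices_iff hw).mp hn
      isDedekindSymbol_EwnOdd hnw hn hwn
  have heq : (fun h k : ℤ =>
        E h k - ((∑ n ∈ oddIndices w, c n * EwnOdd w n h k) + a * (h : ℂ) ^ w)) =
      E - ((∑ n ∈ oddIndices w, c n • EwnOdd w n) + fun h _ : ℤ => (h : ℂ) ^ w * a) := by
    ext h k
    simp [Finset.sum_apply, mul_comm a]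
  rw [heq]
  exact (dedekindSymbols w).sub_mem hE ((dedekindSymbols w).add_mem hsum hF)

end LinearCombination

/-- An even weighted Dedekind symbol of weight `w` with polynomial reciprocity function
is a linear combination of the symbols `E_{w,n}` for odd `n`, `0 < n < w`, together with
`F_w(h,k) = h^w` and `G_w(h,k) = gcd(h,k)^w`. -/
theorem even_symbol_linear_combination (w : ℕ) (hw : Even w) (hw0 : 0 < w)
    (E : ℤ → ℤ → ℂ) (hE : IsDedekindSymbol w E)
    (heven : ∀ h k : ℤ, 0 < h → E h (-k) = E h k)
    (g : MvPolynomial (Fin 2) ℂ) (hg : g.IsHomogeneous w)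
    (hrec : ∀ h k : ℤ, 0 < h → 0 < k →
      E h k - E k (-h) = eval ![(h : ℂ), (k : ℂ)] g) :
    ∃ (c : ℕ → ℂ) (a b : ℂ), ∀ h k : ℤ, 0 < h →
      E h k = (∑ n ∈ (Finset.range w).filter (fun n => 0 < n ∧ Odd n),
          c n * EwnOdd w n h k)
        + a * (h : ℂ) ^ w + b * ((Int.gcd h k : ℕ) : ℂ) ^ w := by
  obtain ⟨c, a, hc⟩ :=
    (hE.isReciprocityPolynomial heven hg hrec).exists_sum_EwnOdd_sub_swap hw
  let D : ℤ → ℤ → ℂ := fun h k =>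
    E h k - ((∑ n ∈ oddIndices w, c n * EwnOdd w n h k) + a * (h : ℂ) ^ w)
  have hD : IsDedekindSymbol w D := isDedekindSymbol_sub_sum_EwnOdd hE hw c a
  have hsymm : ∀ h k : ℤ, 0 < h → 0 < k → D h k = D k h := fun h k hh hk => by
    have hEswap := hrec h k hh hk
    rw [heven k h hk, ← hc h k hh hk] at hEswap
    simp only [mul_sub, Finset.sum_sub_distrib] at hEswap
    linear_combination hEswap
  refine ⟨c, a, D 1 0, fun h k hh => ?_⟩
  rw [← hD.eq_mul_gcd_pow hsymm hh k]
  exact (add_sub_cancel _ _).symm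
end

section
/- Let w be a positive even integer, let n be an odd integer with 0 < n < w, set ñ = w−n, and let m be a positive prime. Then for all (h,k) ∈ ℤ⁺×ℤ: E_{w,n}(h,mk) + Σ_{b=0}^{m−1} E_{w,n}(mh,k+bh) = I_{w,n}(h,mk) + Σ_{b=0}^{m−1} I_{w,n}(mh,k+bh) − (1/(n+1))·[B̄_{n+1}(mk/h) + m^ñ·B̄_{n+1}(k/h)]·h^w − (1/(ñ+1))·[B̄_{ñ+1}(mk/h) + m^n·B̄_{ñ+1}(k/h)]·h^w + (1+m^{w+1})·((w+2)/B_{w+2})·(B_{n+1}/(n+1))·(B_{ñ+1}/(ñ+1))·h^w. In particular, E_{w,n}(1,0)·... specializing to (h,k)=(1,0): E_{w,n}(1,0·m) + Σ_{b=0}^{m−1} E_{w,n}(m,b) = Σ_{b=0}^{m−1} I_{w,n}(m,b) − (B_{n+1}/(n+1))·(1+m^ñ) − (B_{ñ+1}/(ñ+1))·(1+m^n) + (1+m^{w+1})·((w+2)/B_{w+2})·(B_{n+1}/(n+1))·(B_{ñ+1}/(ñ+1)). -/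
open scoped Classical

/-!
`E_{w,n}` is `I_{w,n}` plus a linear combination of `B̄_{n+1}(k/h) h^w`, `B̄_{ñ+1}(k/h) h^w` and
`h^w`. The operator `T_m` is linear, so it suffices to compute it on the last three functions,
whatever their coefficients. On `h^w` it is multiplication by `1 + m^{w+1}`. On the Bernoulli
terms, the arguments `(k+bh)/(mh) = (k/h+b)/m` are exactly those in the distribution relation
`m^p ∑_b B̄_{p+1}((x+b)/m) = B̄_{p+1}(x)`, which follows from Raabe's multiplication theorem on
`[0,1)` and extends to all `x` because both sides have period `1`.
-/

open Finset

section BernoulliFunction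

theorem bernoulliFun_ratCast (N : ℕ) (x : ℚ) :
    bernoulliFun N x = ((Polynomial.bernoulli N).eval x : ℚ) :=
  Polynomial.eval_map_apply (algebraMap ℚ ℝ) x

theorem sum_eval_bernoulli_add_div (N : ℕ) {m : ℕ} (hm : m ≠ 0) (x : ℚ) :
    (m : ℚ) ^ N * ∑ b ∈ range m, (Polynomial.bernoulli N).eval ((x + b) / m) =
      m * (Polynomial.bernoulli N).eval x := by
  have raabe := bernoulliFun_mul N hm ((x / m : ℚ) : ℝ)
  have cast_mul : (m : ℝ) * ((x / m : ℚ) : ℝ) = (x : ℚ) := by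
    push_cast
    field_simp
  have cast_add (b : ℕ) : ((x / m : ℚ) : ℝ) + b / m = ((x + b) / m : ℚ) := by
    push_cast
    ring
  simp only [cast_mul, cast_add, bernoulliFun_ratCast] at raabe
  have raabeQ : (Polynomial.bernoulli N).eval x =
      (m : ℚ) ^ N / m * ∑ b ∈ range m, (Polynomial.bernoulli N).eval ((x + b) / m) := by
    apply Rat.cast_injective (α := ℝ)
    simpa only [Rat.cast_mul, Rat.cast_div, Rat.cast_pow, Rat.cast_natCast, Rat.cast_sum]
      using raabe
  rw [raabeQ]
  field_simp

theorem Bbar_periodic (N : ℕ) : Function.Periodic (Bbar N) 1 := fun x => by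
  simp [Bbar]

theorem Bbar_of_mem_Ico (N : ℕ) {x : ℚ} (hx : x ∈ Set.Ico 0 1) :
    Bbar N x = ((Polynomial.bernoulli N).eval x : ℚ) := by
  simp [Bbar, Int.floor_eq_zero_iff.mpr hx]

theorem Bbar_zero_right (N : ℕ) : Bbar N 0 = Bnum N := by
  simp [Bbar, Bnum]

theorem periodic_sum_range_add_div {α β : Type*} [Field α] [CharZero α] [AddCommMonoid β]
    {f : α → β} (hf : Function.Periodic f 1) (m : ℕ) :
    Function.Periodic (fun x => ∑ b ∈ range m, f ((x + b) / m)) 1 := by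
  intro x
  cases m with
  | zero => simp
  | succ m =>
    have hm : ((m + 1 : ℕ) : α) ≠ 0 := Nat.cast_ne_zero.mpr m.succ_ne_zero
    have wrap : f ((x + 1 + m) / (m + 1 : ℕ)) = f ((x + (0 : ℕ)) / (m + 1 : ℕ)) := by
      rw [← hf ((x + (0 : ℕ)) / (m + 1 : ℕ)), div_add_one hm]
      push_cast
      ring_nf
    have shift (b : ℕ) : x + 1 + b = x + (b + 1 : ℕ) := by
      push_cast
      ring
    beta_reduce
    rw [sum_range_succ, wrap, sum_range_succ']
    simp only [shift]

theorem sum_Bbar_add_div (p : ℕ) {m : ℕ} (hm : m ≠ 0) (x : ℚ) :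
    (m : ℂ) ^ p * ∑ b ∈ range m, Bbar (p + 1) ((x + b) / m) = Bbar (p + 1) x := by
  have raabe_Ico {t : ℚ} (ht : t ∈ Set.Ico 0 1) :
      (m : ℂ) ^ p * ∑ b ∈ range m, Bbar (p + 1) ((t + b) / m) = Bbar (p + 1) t := by
    have mem_Ico {b : ℕ} (hb : b ∈ range m) : (t + b) / m ∈ Set.Ico (0 : ℚ) 1 := by
      have hbm : (b : ℚ) + 1 ≤ m := by exact_mod_cast mem_range.mp hb
      have hm_pos : (0 : ℚ) < m := by positivity
      exact ⟨div_nonneg (add_nonneg ht.1 b.cast_nonneg) hm_pos.le,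
        (div_lt_one hm_pos).mpr (by linarith [ht.2])⟩
    rw [Bbar_of_mem_Ico _ ht, sum_congr rfl fun b hb => Bbar_of_mem_Ico (p + 1) (mem_Ico hb)]
    have raabe := sum_eval_bernoulli_add_div (p + 1) hm t
    rw [pow_succ', mul_assoc] at raabe
    exact_mod_cast mul_left_cancel₀ (Nat.cast_ne_zero.mpr hm) raabe
  have sum_fract := (periodic_sum_range_add_div (Bbar_periodic (p + 1)) m).sub_zsmul_eq
    (x := x) ⌊x⌋
  have Bbar_fract := (Bbar_periodic (p + 1)).sub_zsmul_eq (x := x) ⌊x⌋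
  simp only [zsmul_one, Int.self_sub_floor] at sum_fract Bbar_fract
  rw [← sum_fract, ← Bbar_fract, raabe_Ico ⟨Int.fract_nonneg x, Int.fract_lt_one x⟩]

end BernoulliFunction

section HeckeOperator

/-- The Hecke operator `(T_m F)(h,k) = F(h,mk) + ∑_{b=0}^{m-1} F(mh,k+bh)`. The functions it acts on
are defined for all integers `h`, although the paper only considers `h > 0`. -/
def heckeT (m : ℕ) : (ℤ → ℤ → ℂ) →ₗ[ℂ] (ℤ → ℤ → ℂ) where
  toFun F h k := F h (m * k) + ∑ b ∈ range m, F (m * h) (k + b * h)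
  map_add' F G := by
    ext h k
    simp only [Pi.add_apply, sum_add_distrib]
    ring
  map_smul' c F := by
    ext h k
    simp [mul_add, mul_sum]

theorem heckeT_apply (m : ℕ) (F : ℤ → ℤ → ℂ) (h k : ℤ) :
    heckeT m F h k = F h (m * k) + ∑ b ∈ range m, F (m * h) (k + b * h) :=
  rfl

/-- The function `(h,k) ↦ B̄_N(k/h) h^w`, a Bernoulli function made homogeneous of degree `w`. -/
noncomputable def homogeneousBbar (w N : ℕ) (h k : ℤ) : ℂ :=
  Bbar N ((k : ℚ) / h) * (h : ℂ) ^ w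

/-- The function `(h,k) ↦ h^w`. -/
def powFst (w : ℕ) (h _k : ℤ) : ℂ :=
  (h : ℂ) ^ w

theorem heckeT_homogeneousBbar (p q : ℕ) {m : ℕ} (hm : m ≠ 0) {h : ℤ} (hh : h ≠ 0) (k : ℤ) :
    heckeT m (homogeneousBbar (p + q) (p + 1)) h k =
      (Bbar (p + 1) ((m : ℚ) * k / h) + (m : ℂ) ^ q * Bbar (p + 1) ((k : ℚ) / h)) *
        (h : ℂ) ^ (p + q) := by
  have argument (b : ℕ) :
      ((k + b * h : ℤ) : ℚ) / ((m * h : ℤ) : ℚ) = ((k : ℚ) / h + b) / m := by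
    push_cast
    field_simp
  simp only [heckeT_apply, homogeneousBbar, argument]
  rw [← sum_mul, ← sum_Bbar_add_div p hm ((k : ℚ) / h)]
  push_cast
  ring

theorem heckeT_powFst (w m : ℕ) (h k : ℤ) :
    heckeT m (powFst w) h k = (1 + (m : ℂ) ^ (w + 1)) * (h : ℂ) ^ w := by
  simp only [heckeT_apply, powFst, sum_const, card_range, nsmul_eq_mul]
  push_cast
  ring

end HeckeOperator

section EwnOdd

-- As `a, c = ±1`, the integers `b/a` and `d/c` are consecutive, so no integer `-k` lies strictly
-- between them and the sum is empty.
theorem Iwn_one_left (w n : ℕ) (k : ℤ) : Iwn w n 1 k = 0 := by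
  unfold Iwn
  rw [finsum_eq_zero_of_forall_eq_zero, mul_zero]
  rintro ⟨a, b, c, d⟩
  rw [if_neg]
  rintro ⟨hdet, ha, hc, -, ha_le, -, hc_le, hneg⟩
  dsimp only at hdet ha hc ha_le hc_le hneg
  have ha_unit : a = 1 ∨ a = -1 := by grind
  have hc_unit : c = 1 ∨ c = -1 := by grind
  have hneg_int : (k + a * b) * (k + c * d) < 0 := by
    rcases ha_unit with rfl | rfl <;> rcases hc_unit with rfl | rfl <;>
      · norm_num [div_neg] at hneg ⊢
        exact_mod_cast hneg
  have hconsec : (c * d - a * b = 1) ∨ (c * d - a * b = -1) := by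
    rcases ha_unit with rfl | rfl <;> rcases hc_unit with rfl | rfl <;> lia
  rcases mul_neg_iff.mp hneg_int with ⟨hpos, hneg⟩ | ⟨hneg, hpos⟩ <;> lia

theorem EwnOdd_eq_linearCombination (w n : ℕ) :
    EwnOdd w n = Iwn w n - (1 / ((n : ℂ) + 1)) • homogeneousBbar w (n + 1)
      - (1 / (((w - n : ℕ) : ℂ) + 1)) • homogeneousBbar w (w - n + 1)
      + (((w : ℂ) + 2) / Bnum (w + 2) * (Bnum (n + 1) / ((n : ℂ) + 1))
          * (Bnum (w - n + 1) / (((w - n : ℕ) : ℂ) + 1))) • powFst w := by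
  ext h k
  simp only [EwnOdd, homogeneousBbar, powFst, Pi.add_apply, Pi.sub_apply, Pi.smul_apply,
    smul_eq_mul]
  ring

theorem heckeT_EwnOdd_general {w n m : ℕ} (hnw : n ≤ w) (hm : m ≠ 0) {h : ℤ} (hh : h ≠ 0) (k : ℤ) :
    heckeT m (EwnOdd w n) h k = heckeT m (Iwn w n) h k
      - (1 / ((n : ℂ) + 1)) *
          (Bbar (n + 1) ((m : ℚ) * k / h) + (m : ℂ) ^ (w - n) * Bbar (n + 1) ((k : ℚ) / h))
          * (h : ℂ) ^ w
      - (1 / (((w - n : ℕ) : ℂ) + 1)) *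
          (Bbar (w - n + 1) ((m : ℚ) * k / h) + (m : ℂ) ^ n * Bbar (w - n + 1) ((k : ℚ) / h))
          * (h : ℂ) ^ w
      + (1 + (m : ℂ) ^ (w + 1)) * (((w : ℂ) + 2) / Bnum (w + 2))
          * (Bnum (n + 1) / ((n : ℂ) + 1)) * (Bnum (w - n + 1) / (((w - n : ℕ) : ℂ) + 1))
          * (h : ℂ) ^ w := by
  have heckeT_n := heckeT_homogeneousBbar n (w - n) hm hh k
  have heckeT_wn := heckeT_homogeneousBbar (w - n) n hm hh k
  rw [Nat.add_sub_cancel' hnw] at heckeT_n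
  rw [Nat.sub_add_cancel hnw] at heckeT_wn
  simp only [EwnOdd_eq_linearCombination, map_add, map_sub, map_smul, Pi.add_apply, Pi.sub_apply,
    Pi.smul_apply, smul_eq_mul, heckeT_n, heckeT_wn, heckeT_powFst]
  ring

theorem heckeT_EwnOdd_one_zero {w n m : ℕ} (hnw : n ≤ w) (hm : m ≠ 0) :
    EwnOdd w n 1 0 + ∑ b ∈ range m, EwnOdd w n m b
      = (∑ b ∈ range m, Iwn w n m b)
        - Bnum (n + 1) / ((n : ℂ) + 1) * (1 + (m : ℂ) ^ (w - n))
        - Bnum (w - n + 1) / (((w - n : ℕ) : ℂ) + 1) * (1 + (m : ℂ) ^ n)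
        + (1 + (m : ℂ) ^ (w + 1)) * (((w : ℂ) + 2) / Bnum (w + 2))
            * (Bnum (n + 1) / ((n : ℂ) + 1)) * (Bnum (w - n + 1) / (((w - n : ℕ) : ℂ) + 1)) := by
  have at_one_zero := heckeT_EwnOdd_general hnw hm one_ne_zero 0
  simp only [heckeT_apply, Iwn_one_left, Bbar_zero_right, Int.cast_zero, Int.cast_one, mul_zero,
    mul_one, zero_add, zero_div, one_pow] at at_one_zero
  rw [at_one_zero]
  ring

end EwnOdd

/-- Hecke-operator computation for `E_{w,n}` (`n` odd, `0 < n < w`, `m` prime):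
the general formula for `(T_m E_{w,n})(h,k) = E_{w,n}(h,mk) + ∑_{b=0}^{m−1} E_{w,n}(mh,k+bh)`,
together with its specialization at `(h,k) = (1,0)`. -/
theorem heckeT_EwnOdd (w n m : ℕ) (hw : Even w) (hw0 : 0 < w)
    (hn : Odd n) (hn0 : 0 < n) (hnw : n < w) (hm : m.Prime) :
    (∀ h k : ℤ, 0 < h →
      EwnOdd w n h ((m : ℤ) * k) + ∑ b ∈ Finset.range m, EwnOdd w n ((m : ℤ) * h) (k + (b : ℤ) * h)
        = Iwn w n h ((m : ℤ) * k) + (∑ b ∈ Finset.range m, Iwn w n ((m : ℤ) * h) (k + (b : ℤ) * h))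
          - (1 / ((n : ℂ) + 1)) *
              (Bbar (n + 1) ((m : ℚ) * k / h) + (m : ℂ) ^ (w - n) * Bbar (n + 1) ((k : ℚ) / h))
              * (h : ℂ) ^ w
          - (1 / (((w - n : ℕ) : ℂ) + 1)) *
              (Bbar (w - n + 1) ((m : ℚ) * k / h) + (m : ℂ) ^ n * Bbar (w - n + 1) ((k : ℚ) / h))
              * (h : ℂ) ^ w
          + (1 + (m : ℂ) ^ (w + 1)) * (((w : ℂ) + 2) / Bnum (w + 2))
              * (Bnum (n + 1) / ((n : ℂ) + 1)) * (Bnum (w - n + 1) / (((w - n : ℕ) : ℂ) + 1))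
              * (h : ℂ) ^ w) ∧
    (EwnOdd w n 1 0 + ∑ b ∈ Finset.range m, EwnOdd w n (m : ℤ) (b : ℤ)
      = (∑ b ∈ Finset.range m, Iwn w n (m : ℤ) (b : ℤ))
        - Bnum (n + 1) / ((n : ℂ) + 1) * (1 + (m : ℂ) ^ (w - n))
        - Bnum (w - n + 1) / (((w - n : ℕ) : ℂ) + 1) * (1 + (m : ℂ) ^ n)
        + (1 + (m : ℂ) ^ (w + 1)) * (((w : ℂ) + 2) / Bnum (w + 2))
            * (Bnum (n + 1) / ((n : ℂ) + 1)) * (Bnum (w - n + 1) / (((w - n : ℕ) : ℂ) + 1))) :=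
  ⟨fun _ k hh => heckeT_EwnOdd_general hnw.le hm.ne_zero hh.ne' k,
    heckeT_EwnOdd_one_zero hnw.le hm.ne_zero⟩
end

section
/- Let w be a positive even integer, n a positive integer, h ∈ ℤ⁺ and k ∈ ℤ. Then the Apostol generalized Dedekind sums satisfy the identity Σ_{a,d ∈ ℤ⁺, ad=n} Σ_{b=0}^{d−1} d^w·s_{w+1}(ak+bh, dh) = σ_{w+1}(n)·s_{w+1}(k,h), where σ_{w+1}(n) = Σ_{d|n, d>0} d^{w+1}. -/
/-- Apostol's generalized Dedekind sum `s_m(k,h) = ∑_{μ=0}^{h−1} (μ/h)·B̄_m(μk/h)`,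
for `h ∈ ℤ⁺` and `k ∈ ℤ`. -/
noncomputable def apostolS (m : ℕ) (k h : ℤ) : ℂ :=
  ∑ μ ∈ Finset.range h.toNat, ((μ : ℂ) / (h : ℂ)) * Bbar m ((μ : ℚ) * (k : ℚ) / (h : ℚ))

/-!
Put `g = gcd(d, μ)`. The multiplication theorem for `B̄_{w+1}` collapses the sum over `b` of the
`μ`-th terms of `d^w s_{w+1}(ak + bh, dh)` to `g^{w+1} (μ/(dh)) B̄_{w+1}((aμ/g)k/h)`. With `t = aμ`
the weight is `t/(nh)` and `g = gcd(n, t)/a`, so for fixed `t ∈ [0, nh)` the summand depends only on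
the divisor of `gcd(n, t)` complementary to `a`. Replacing `a` by its complementary divisor `g` and
writing `t = gl` gives `∑_{g ∣ n} g^{w+1} s_{w+1}((n/g)k, (n/g)h)`. Finally
`s_{w+1}(qk, qh) = s_{w+1}(k, h)`, because `B̄_{w+1}` is odd and so sums to zero over a full period.
-/

open Finset Function

section PeriodicSums

variable {M : Type*}

theorem sum_range_natCast_zmod [AddCommMonoid M] (q : ℕ) [NeZero q] (G : ZMod q → M) :
    ∑ b ∈ range q, G (b : ZMod q) = ∑ x, G x :=
  sum_bij' (fun b _ ↦ (b : ZMod q)) (fun x _ ↦ x.val) (by simp)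
    (fun x _ ↦ mem_range.2 x.val_lt) (fun b hb ↦ ZMod.val_cast_of_lt (mem_range.1 hb))
    (by simp) (by simp)

theorem sum_range_affine_of_periodic [AddCommMonoid M] {F : ℤ → M} {q : ℕ} (hF : Periodic F q)
    {ν : ℤ} (hν : IsCoprime ν q) (z : ℤ) :
    ∑ b ∈ range q, F (ν * b + z) = ∑ b ∈ range q, F b := by
  rcases eq_or_ne q 0 with rfl | hq
  · simp
  have : NeZero q := ⟨hq⟩
  obtain ⟨u, hu⟩ : IsUnit (ν : ZMod q) := (ZMod.coe_int_isUnit_iff_isCoprime ν q).2 hν.symm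
  let G : ZMod q → M := fun x ↦ F x.val
  have hG (i : ℤ) : F i = G i := by
    simp only [G, ZMod.val_intCast]
    rw [Int.emod_def, mul_comm]
    exact (hF.sub_int_mul_eq _).symm
  calc ∑ b ∈ range q, F (ν * b + z)
      = ∑ b ∈ range q, G (u * (b : ZMod q) + z) := by simp [hG, hu]
    _ = ∑ x, G (u * x + z) := sum_range_natCast_zmod q fun x ↦ G (u * x + z)
    _ = ∑ x, G x := (u.mulLeft.trans (Equiv.addRight (z : ZMod q))).sum_comp G
    _ = ∑ b ∈ range q, F b := by simp [hG, sum_range_natCast_zmod]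

theorem sum_range_eq_zero_of_odd_periodic [AddCommGroup M] [IsAddTorsionFree M] {F : ℤ → M} {q : ℕ}
    (hF : Periodic F q) (hodd : F.Odd) : ∑ b ∈ range q, F b = 0 := by
  have h := sum_range_affine_of_periodic hF (isCoprime_one_left.neg_left) 0
  simp only [neg_one_mul, add_zero, hodd _, sum_neg_distrib] at h
  exact neg_eq_self.1 h

theorem sum_range_mul [AddCommMonoid M] (f : ℕ → M) (g q : ℕ) :
    ∑ b ∈ range (g * q), f b = ∑ i ∈ range g, ∑ j ∈ range q, f (i * q + j) := by
  induction g with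
  | zero => simp
  | succ g ih => rw [Nat.succ_mul, sum_range_add, ih, sum_range_succ]

theorem periodic_natCast_mul_add {F : ℤ → M} {q : ℕ} (hF : Periodic F q) (i j : ℕ) :
    F (i * q + j) = F j := by
  rw [add_comm, hF.nat_mul i j]

theorem sum_range_mul_of_periodic [AddCommMonoid M] {F : ℤ → M} {q : ℕ} (hF : Periodic F q)
    (g : ℕ) : ∑ b ∈ range (g * q), F b = g • ∑ b ∈ range q, F b := by
  simp [sum_range_mul, periodic_natCast_mul_add hF]

theorem sum_range_mul_natCast_mul_of_periodic {R : Type*} [Semiring R] {F : ℤ → R} {q : ℕ}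
    (hF : Periodic F q) (hsum : ∑ b ∈ range q, F b = 0) (g : ℕ) :
    ∑ b ∈ range (g * q), (b : R) * F b = g * ∑ b ∈ range q, (b : R) * F b := by
  simp [sum_range_mul, periodic_natCast_mul_add hF, add_mul, sum_add_distrib, ← mul_sum, hsum]

end PeriodicSums

section DivisorSums

variable {M : Type*} [AddCommMonoid M]

theorem sum_range_filter_dvd {g : ℕ} (hg : g ≠ 0) (N : ℕ) (f : ℕ → M) :
    ∑ t ∈ range (g * N) with g ∣ t, f t = ∑ l ∈ range N, f (g * l) := by
  have hg_pos : 0 < g := Nat.pos_of_ne_zero hg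
  refine (sum_nbij (g * ·) ?_ ?_ ?_ fun _ _ ↦ rfl).symm
  · simp [hg_pos]
  · exact (mul_right_injective₀ hg).injOn
  · intro t ht
    obtain ⟨ht, l, rfl⟩ := mem_filter.1 ht
    exact ⟨l, by simpa [hg_pos] using ht, rfl⟩

theorem sum_divisors_sum_range_mul (n H : ℕ) (F : ℕ → ℕ → M) :
    ∑ g ∈ n.divisors, ∑ l ∈ range (n / g * H), F g (g * l)
      = ∑ t ∈ range (n * H), ∑ g ∈ (n.gcd t).divisors, F g t := by
  have multiples : ∀ g ∈ n.divisors, ∑ l ∈ range (n / g * H), F g (g * l)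
      = ∑ t ∈ range (n * H) with g ∣ t, F g t := fun g hg ↦ by
    rw [← sum_range_filter_dvd (Nat.pos_of_mem_divisors hg).ne', ← mul_assoc,
      Nat.mul_div_cancel' (Nat.dvd_of_mem_divisors hg)]
  rw [sum_congr rfl multiples]
  refine sum_comm' fun g t ↦ ?_
  simp only [Nat.mem_divisors, mem_filter, Nat.dvd_gcd_iff, Nat.gcd_eq_zero_iff, ne_eq, mem_range]
  have : t < n * H → n ≠ 0 := by rintro h rfl; simp at h
  tauto

theorem sum_divisors_sum_range_gcd (n H : ℕ) (G : ℕ → ℕ → M) :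
    ∑ d ∈ n.divisors, ∑ μ ∈ range (d * H), G (d.gcd μ) (n / d * μ)
      = ∑ g ∈ n.divisors, ∑ l ∈ range (n / g * H), G g (g * l) := by
  have gcd_div {a : ℕ} (ha : a ∈ n.divisors) (μ : ℕ) :
      (n / a).gcd μ = n.gcd (a * μ) / a := by
    obtain ⟨d, rfl⟩ := Nat.dvd_of_mem_divisors ha
    have ha : 0 < a := Nat.pos_of_mem_divisors ha
    rw [Nat.gcd_mul_left, Nat.mul_div_cancel_left _ ha, Nat.mul_div_cancel_left _ ha]
  calc ∑ d ∈ n.divisors, ∑ μ ∈ range (d * H), G (d.gcd μ) (n / d * μ)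
      = ∑ a ∈ n.divisors, ∑ μ ∈ range (n / a * H), G ((n / a).gcd μ) (a * μ) := by
        rw [← Nat.sum_div_divisors]
        refine sum_congr rfl fun a ha ↦ ?_
        rw [Nat.div_div_self (Nat.dvd_of_mem_divisors ha) (Nat.ne_zero_of_mem_divisors ha)]
    _ = ∑ a ∈ n.divisors, ∑ μ ∈ range (n / a * H), G (n.gcd (a * μ) / a) (a * μ) :=
        sum_congr rfl fun a ha ↦ sum_congr rfl fun μ _ ↦ by rw [gcd_div ha]
    _ = ∑ t ∈ range (n * H), ∑ a ∈ (n.gcd t).divisors, G (n.gcd t / a) t :=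
        sum_divisors_sum_range_mul n H fun a t ↦ G (n.gcd t / a) t
    _ = ∑ t ∈ range (n * H), ∑ g ∈ (n.gcd t).divisors, G g t :=
        sum_congr rfl fun t _ ↦ Nat.sum_div_divisors _ fun g ↦ G g t
    _ = ∑ g ∈ n.divisors, ∑ l ∈ range (n / g * H), G g (g * l) :=
        (sum_divisors_sum_range_mul n H G).symm

end DivisorSums

section BernoulliFunction

theorem Bbar_add_intCast (m : ℕ) (x : ℚ) (z : ℤ) : Bbar m (x + z) = Bbar m x := by
  simp [Bbar]

theorem periodic_Bbar_add_mul_div (m : ℕ) (x : ℚ) (ν : ℤ) (q : ℕ) :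
    Periodic (fun c : ℤ ↦ Bbar m (x + ν * c / q)) q := fun c ↦ by
  rcases eq_or_ne (q : ℚ) 0 with hq | hq
  · simp [hq]
  · calc Bbar m (x + ν * (c + q : ℤ) / q) = Bbar m (x + ν * c / q + ν) := by
          congr 1
          push_cast
          field_simp
          ring
      _ = Bbar m (x + ν * c / q) := Bbar_add_intCast m _ ν

theorem sum_Bbar_add_affine_div (m : ℕ) {ν : ℤ} {q : ℕ} (hν : IsCoprime ν q) (z : ℤ) (x : ℚ) :
    ∑ b ∈ range q, Bbar m (x + (ν * b + z) / q) = ∑ c ∈ range q, Bbar m (x + c / q) := by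
  simpa using sum_range_affine_of_periodic (periodic_Bbar_add_mul_div m x 1 q) hν z

theorem Bbar_neg {m : ℕ} (hm : Odd m) (hm1 : m ≠ 1) (x : ℚ) : Bbar m (-x) = -Bbar m x := by
  simp only [Bbar, Int.self_sub_floor]
  rcases eq_or_ne (Int.fract x) 0 with hx | hx
  · have h0 : bernoulli m = 0 := bernoulli_eq_zero_of_odd hm (by have := hm.pos; omega)
    simp [hx, Int.fract_neg_eq_zero.2 hx, Polynomial.bernoulli_eval_zero, h0]
  · simp [Int.fract_neg hx, Polynomial.bernoulli_eval_one_sub, hm.neg_one_pow]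

theorem Bbar_eq_bernoulliFun (m : ℕ) {x : ℚ} (hx : x ∈ Set.Ico 0 1) :
    Bbar m x = (bernoulliFun m x : ℝ) := by
  have h := Polynomial.eval_map_apply (p := Polynomial.bernoulli m) (f := algebraMap ℚ ℝ) x
  simp only [eq_ratCast] at h
  simp [Bbar, bernoulliFun, Int.fract_eq_self.2 hx, h]

theorem Bbar_natCast_mul (m : ℕ) {q : ℕ} (hq : q ≠ 0) (x : ℚ) :
    Bbar m (q * x) = (q : ℂ) ^ m / q * ∑ c ∈ range q, Bbar m (x + c / q) := by
  have hq0 : (0 : ℚ) < q := by positivity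
  obtain ⟨t, z, ht0, ht1, rfl⟩ : ∃ (t : ℚ) (z : ℤ), 0 ≤ t ∧ t < 1 ∧ x = (t + z) / q :=
    ⟨Int.fract (q * x), ⌊q * x⌋, Int.fract_nonneg _, Int.fract_lt_one _, by
      rw [Int.fract_add_floor]; field_simp⟩
  have shift : ∑ c ∈ range q, Bbar m ((t + z) / q + c / q)
      = ∑ c ∈ range q, Bbar m (t / q + c / q) := by
    rw [← sum_Bbar_add_affine_div m isCoprime_one_left z (t / q)]
    refine sum_congr rfl fun c _ ↦ ?_
    congr 1
    push_cast
    ring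
  have unit_interval : ∀ c ∈ range q, Bbar m (t / q + c / q)
      = (bernoulliFun m (t / q + c / q : ℝ) : ℝ) := fun c hc ↦ by
    have hc : (c : ℚ) + 1 ≤ q := by exact_mod_cast mem_range.1 hc
    rw [Bbar_eq_bernoulliFun m ⟨by positivity, by rw [← add_div, div_lt_one hq0]; linarith⟩]
    push_cast
    rfl
  rw [shift, sum_congr rfl unit_interval, mul_div_cancel₀ _ hq0.ne', Bbar_add_intCast,
    Bbar_eq_bernoulliFun m ⟨ht0, ht1⟩]
  have h := bernoulliFun_mul m hq (t / q)
  rw [mul_div_cancel₀ _ (by positivity)] at h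
  rw [h]
  push_cast
  rfl

theorem pow_mul_sum_Bbar_add_mul_div (w : ℕ) {d : ℕ} (hd : d ≠ 0) (μ : ℕ) (x : ℚ) :
    (d : ℂ) ^ w * ∑ b ∈ range d, Bbar (w + 1) (x + μ * b / d)
      = (d.gcd μ : ℂ) ^ (w + 1) * Bbar (w + 1) (d / d.gcd μ * x) := by
  obtain ⟨δ, ν, hcop, hδ, hν⟩ := Nat.exists_coprime d μ
  set g := d.gcd μ
  obtain ⟨hδ0, hg0⟩ : δ ≠ 0 ∧ g ≠ 0 := mul_ne_zero_iff.1 (hδ ▸ hd)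
  have reduce : ∑ b ∈ range d, Bbar (w + 1) (x + μ * b / d)
      = g * ∑ c ∈ range δ, Bbar (w + 1) (x + c / δ) := by
    have cancel (b : ℕ) : (μ * b / d : ℚ) = ν * b / δ := by
      rw [hδ, hν]
      push_cast
      field_simp
    calc ∑ b ∈ range d, Bbar (w + 1) (x + μ * b / d)
        = ∑ b ∈ range (g * δ), Bbar (w + 1) (x + ν * b / δ) := by
          simp only [cancel]
          rw [hδ, mul_comm]
      _ = g * ∑ b ∈ range δ, Bbar (w + 1) (x + ν * b / δ) := by
          simpa using sum_range_mul_of_periodic (periodic_Bbar_add_mul_div (w + 1) x ν δ) g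
      _ = g * ∑ c ∈ range δ, Bbar (w + 1) (x + c / δ) := by
          simpa using congrArg ((g : ℂ) * ·) (sum_Bbar_add_affine_div (w + 1)
            (Nat.isCoprime_iff_coprime.2 hcop.symm) 0 x)
  have scale : (d : ℚ) / g * x = δ * x := by
    rw [hδ]
    push_cast
    field_simp
  rw [reduce, scale, Bbar_natCast_mul _ hδ0, hδ]
  push_cast
  field_simp
  ring

end BernoulliFunction

section DedekindSums

theorem apostolS_natCast (m : ℕ) (k : ℤ) (h : ℕ) :
    apostolS m k h = ∑ μ ∈ range h, (μ / h : ℂ) * Bbar m (μ * k / h) := by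
  simp [apostolS]

theorem apostolS_natCast_mul (m : ℕ) (k : ℤ) (q h : ℕ) :
    apostolS m k (q * h)
      = ∑ μ ∈ range (q * h), (μ / (q * h) : ℂ) * Bbar m (μ * k / (q * h)) := by
  exact_mod_cast apostolS_natCast m k (q * h)

theorem apostolS_mul_mul {m : ℕ} (hm : Odd m) (hm1 : m ≠ 1) {q : ℕ} (hq : q ≠ 0) (k : ℤ) (h : ℕ) :
    apostolS m (q * k) (q * h) = apostolS m k h := by
  let F (c : ℤ) : ℂ := Bbar m (c * k / h)
  have hper : Periodic F h := by
    simpa [F, mul_comm] using periodic_Bbar_add_mul_div m 0 k h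
  have hodd : F.Odd := fun c ↦ by
    simp [F, ← Bbar_neg hm hm1, neg_div]
  have hF (μ : ℕ) : Bbar m (μ * (q * k : ℤ) / (q * h)) = F μ := by
    push_cast
    rw [mul_left_comm, mul_div_mul_left _ _ (by exact_mod_cast hq)]
    rfl
  calc apostolS m (q * k) (q * h)
      = (∑ μ ∈ range (q * h), (μ : ℂ) * F μ) / (q * h) := by
        simp only [apostolS_natCast_mul, hF, div_mul_eq_mul_div, ← sum_div]
    _ = (q * ∑ μ ∈ range h, (μ : ℂ) * F μ) / (q * h) := by
        rw [sum_range_mul_natCast_mul_of_periodic hper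
          (sum_range_eq_zero_of_odd_periodic hper hodd)]
    _ = (∑ μ ∈ range h, (μ : ℂ) * F μ) / h := mul_div_mul_left _ _ (by exact_mod_cast hq)
    _ = apostolS m k h := by
        simp only [apostolS_natCast, F, div_mul_eq_mul_div, ← sum_div, Int.cast_natCast]

theorem sum_pow_mul_apostolS_add_mul (w : ℕ) {d h : ℕ} (hd : d ≠ 0) (hh : h ≠ 0) (j : ℤ) :
    ∑ b ∈ range d, (d : ℂ) ^ w * apostolS (w + 1) (j + b * h) (d * h)
      = ∑ μ ∈ range (d * h), (μ / (d * h) : ℂ) *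
          ((d.gcd μ : ℂ) ^ (w + 1) * Bbar (w + 1) (μ * j / (d.gcd μ * h))) := by
  simp only [← mul_sum, apostolS_natCast_mul]
  rw [sum_comm, mul_sum]
  refine sum_congr rfl fun μ _ ↦ ?_
  have split_arg (b : ℕ) : (μ * (j + b * h : ℤ) / (d * h) : ℚ)
      = μ * j / (d * h) + μ * b / d := by
    push_cast
    field_simp
  have scale_arg : (d / d.gcd μ * (μ * j / (d * h)) : ℚ) = μ * j / (d.gcd μ * h) := by
    have : d.gcd μ ≠ 0 := Nat.gcd_ne_zero_left hd
    field_simp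
  simp only [← mul_sum, split_arg]
  rw [mul_left_comm, pow_mul_sum_Bbar_add_mul_div w hd, scale_arg]

/-- The summand `g^{w+1} · (t/(nh)) · B̄_{w+1}((t/g)k/h)` of a pair `g ∣ t` with `0 ≤ t < nh`. Both
sides of the Knopp–Parson–Rosen identity are rearranged into sums of it. The quotient `t/g` is taken
in `ℚ`. -/
noncomputable def dedekindTerm (w n h : ℕ) (k : ℤ) (g t : ℕ) : ℂ :=
  (t / (n * h) : ℂ) * ((g : ℂ) ^ (w + 1) * Bbar (w + 1) (t * k / (g * h)))

variable {n h : ℕ}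

theorem sum_pow_mul_apostolS_eq_sum_dedekindTerm (w : ℕ) {d : ℕ} (hd : d ∈ n.divisors)
    (hh : h ≠ 0) (k : ℤ) :
    ∑ b ∈ range d, (d : ℂ) ^ w * apostolS (w + 1) ((n / d : ℕ) * k + b * h) (d * h)
      = ∑ μ ∈ range (d * h), dedekindTerm w n h k (d.gcd μ) (n / d * μ) := by
  obtain ⟨⟨a, rfl⟩, hda⟩ := Nat.mem_divisors.1 hd
  obtain ⟨hd0, ha0⟩ := mul_ne_zero_iff.1 hda
  rw [Nat.mul_div_cancel_left _ (Nat.pos_of_ne_zero hd0), sum_pow_mul_apostolS_add_mul w hd0 hh]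
  refine sum_congr rfl fun μ _ ↦ ?_
  have weight : (μ / (d * h) : ℂ) = (a * μ : ℕ) / ((d * a : ℕ) * h) := by
    push_cast
    field_simp
  have arg : (μ * (a * k : ℤ) : ℚ) = (a * μ : ℕ) * k := by
    push_cast
    ring
  rw [dedekindTerm, weight, arg]

theorem pow_mul_apostolS_eq_sum_dedekindTerm {w : ℕ} (hw : Even w) (hw0 : w ≠ 0) {g : ℕ}
    (hg : g ∈ n.divisors) (k : ℤ) :
    (g : ℂ) ^ (w + 1) * apostolS (w + 1) k h
      = ∑ l ∈ range (n / g * h), dedekindTerm w n h k g (g * l) := by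
  obtain ⟨⟨q, rfl⟩, hgq⟩ := Nat.mem_divisors.1 hg
  obtain ⟨hg0, hq0⟩ := mul_ne_zero_iff.1 hgq
  rw [Nat.mul_div_cancel_left _ (Nat.pos_of_ne_zero hg0),
    ← apostolS_mul_mul hw.add_one (by simpa using hw0) hq0, apostolS_natCast_mul, mul_sum]
  refine sum_congr rfl fun l _ ↦ ?_
  have weight : (l / (q * h) : ℂ) = (g * l : ℕ) / ((g * q : ℕ) * h) := by
    push_cast
    rw [mul_assoc, mul_div_mul_left _ _ (by exact_mod_cast hg0)]
  have arg : (l * (q * k : ℤ) / (q * h) : ℚ) = (g * l : ℕ) * k / (g * h) := by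
    push_cast
    rw [mul_left_comm, mul_div_mul_left _ _ (by exact_mod_cast hq0), mul_assoc,
      mul_div_mul_left _ _ (by exact_mod_cast hg0)]
  rw [dedekindTerm, weight, arg, mul_left_comm]

end DedekindSums

/-- The Knopp–Parson–Rosen identity for Apostol's generalized Dedekind sums:
`∑_{ad=n, d>0} ∑_{b=0}^{d−1} d^w·s_{w+1}(ak+bh, dh) = σ_{w+1}(n)·s_{w+1}(k,h)`. -/
theorem knopp_parson_rosen (w : ℕ) (hw : Even w) (hw0 : 0 < w)
    (n : ℕ) (hn : 0 < n) (h k : ℤ) (hh : 0 < h) :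
    ∑ d ∈ n.divisors, ∑ b ∈ Finset.range d,
        (d : ℂ) ^ w * apostolS (w + 1) (((n / d : ℕ) : ℤ) * k + (b : ℤ) * h) ((d : ℤ) * h)
      = (∑ d ∈ n.divisors, (d : ℂ) ^ (w + 1)) * apostolS (w + 1) k h := by
  lift h to ℕ using hh.le
  have hh0 : h ≠ 0 := by exact_mod_cast hh.ne'
  calc ∑ d ∈ n.divisors, ∑ b ∈ range d,
        (d : ℂ) ^ w * apostolS (w + 1) ((n / d : ℕ) * k + b * h) (d * h)
      = ∑ d ∈ n.divisors, ∑ μ ∈ range (d * h),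
          dedekindTerm w n h k (d.gcd μ) (n / d * μ) :=
        sum_congr rfl fun d hd ↦ sum_pow_mul_apostolS_eq_sum_dedekindTerm w hd hh0 k
    _ = ∑ g ∈ n.divisors, ∑ l ∈ range (n / g * h), dedekindTerm w n h k g (g * l) :=
        sum_divisors_sum_range_gcd n h (dedekindTerm w n h k)
    _ = ∑ g ∈ n.divisors, (g : ℂ) ^ (w + 1) * apostolS (w + 1) k h :=
        sum_congr rfl fun g hg ↦ (pow_mul_apostolS_eq_sum_dedekindTerm hw hw0.ne' hg k).symm
    _ = (∑ g ∈ n.divisors, (g : ℂ) ^ (w + 1)) * apostolS (w + 1) k h := (sum_mul ..).symm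
end
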